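/- Let C : ℕ → ℂ satisfy Σ_{n≥0} C(n)q^n = ∏_{k≥0} ((1 − q^{5k+1})(1 − q^{5k+4}))/((1 − q^{5k+2})(1 − q^{5k+3})) for all complex q with |q| < 1. Then, as n → ∞, C(n) is asymptotically equivalent to (2^{1/2}/5^{3/4})·cos((4π/5)(n + 3/20))·(n + 1/5)^{−3/4}·exp((4π/(5√5))·√(n + 1/5)); that is, the ratio of the two sides tends to 1. In particular, for all sufficiently large n, C(n) > 0 when n ≡ 0 or 2 (mod 5), and C(n) < 0 when n ≡ 1, 3 or 4 (mod 5). -/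

import Mathlib

open Filter Topology Complex

/-! Expanding the logarithms of the factors, the product is `exp (rrLog q)` with
`rrLog q = -∑ g(qⁿ) / n`, where `g(x) = ∑ (m/5) xᵐ` is the generating function of the Legendre
symbol. Evaluating a Gauss sum, `√5 g(x) = ∑ (b/5) / (1 - ψ(b) x)` over `b` modulo `5`, where
`ψ(b) = exp(2πib/5)`.

At `q = ψ(2) exp(-s)` the polar parts of the terms add up to `4π² / (125 s)`, because
`∑ (n/5) / n² = 4π² / (25√5)`. The values at `s = 0` of their regular parts are odd in `n`
modulo `5`, so they contribute a cotangent sum, which yields the constant `-3πi/25`.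

On the rest of the upper half of `|q| = exp(-σ)`, where `|arg q - 4π/5| ≥ 100σ`, one has
`Re rrLog q ≤ (4π²/125 - 1/100) / σ`. Indeed `-Re g` is large only near the poles
`ψ(2)` and `ψ(3)` of `g`, and `qⁿ` can be close to at most one of them; this bounds the terms with
`n ≥ 2` by `(π²/6 - 1) / (√5 σ) + O(σ^(-1/2))`, and the term `n = 1` is small because `q` is far
from `ψ(2)`.

Hence, with `A = 4π²/125`, Cauchy's integral over `|q| = exp(-√(A/n))` is dominated by the saddle
points at `ψ(2)` and its conjugate, and Laplace's method gives the phase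
`Re exp(-3πi/25 - 4πin/5) = cos((4π/5)(n + 3/20))`.
-/

section LogProduct

lemma norm_natCast_add_one (n : ℕ) : ‖(n : ℂ) + 1‖ = n + 1 := by
  exact_mod_cast Complex.norm_natCast (n + 1)

lemma one_sub_ne_zero_of_norm_lt_one {x : ℂ} (hx : ‖x‖ < 1) : 1 - x ≠ 0 := by
  rw [sub_ne_zero]
  rintro rfl
  simp at hx

variable {q : ℂ}

lemma summable_pow_arith_progression_div (hq : ‖q‖ < 1) {m a : ℕ} (hm : m ≠ 0) (ha : a ≠ 0) :
    Summable fun p : ℕ × ℕ ↦ (q ^ (m * p.1 + a)) ^ (p.2 + 1) / ((p.2 : ℂ) + 1) := by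
  have hgeom := summable_geometric_of_lt_one (norm_nonneg q) hq
  refine .of_norm_bounded (hgeom.mul_of_nonneg hgeom (fun _ ↦ by positivity)
    fun _ ↦ by positivity) ?_
  rintro ⟨k, n⟩
  rw [norm_div, norm_pow, norm_pow, norm_natCast_add_one, ← pow_mul, ← pow_add]
  have hexp : k + n ≤ (m * k + a) * (n + 1) := by
    nlinarith [Nat.le_mul_of_pos_left k (Nat.pos_of_ne_zero hm), Nat.pos_of_ne_zero ha,
      Nat.zero_le (m * k * n), Nat.le_mul_of_pos_left n (Nat.pos_of_ne_zero ha)]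
  calc ‖q‖ ^ ((m * k + a) * (n + 1)) / (n + 1)
      ≤ ‖q‖ ^ ((m * k + a) * (n + 1)) := div_le_self (by positivity) (by simp)
    _ ≤ ‖q‖ ^ (k + n) := pow_le_pow_of_le_one (norm_nonneg q) hq.le hexp

lemma exists_hasSum_log_one_sub_pow (hq : ‖q‖ < 1) {m a : ℕ} (hm : m ≠ 0) (ha : a ≠ 0) :
    ∃ T : ℂ, HasSum (fun k : ℕ ↦ log (1 - q ^ (m * k + a))) (-T) ∧
      HasSum (fun n : ℕ ↦ (q ^ (n + 1)) ^ a / (1 - (q ^ (n + 1)) ^ m) / ((n : ℂ) + 1)) T := by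
  have hsum := (summable_pow_arith_progression_div hq hm ha).hasSum
  refine ⟨_, hsum.neg.prod_fiberwise fun k ↦ ?_,
    ((Equiv.prodComm ℕ ℕ).hasSum_iff.mpr hsum).prod_fiberwise fun n ↦ ?_⟩
  · have hk : ‖q ^ (m * k + a)‖ < 1 := by
      rw [norm_pow]
      exact pow_lt_one₀ (norm_nonneg q) hq (by lia)
    have hlog := (hasSum_taylorSeries_neg_log hk).neg
    rw [neg_neg, ← hasSum_nat_add_iff' 1] at hlog
    simpa using hlog
  · have hn : ‖(q ^ (n + 1)) ^ m‖ < 1 := by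
      rw [← pow_mul, norm_pow]
      exact pow_lt_one₀ (norm_nonneg q) hq (by positivity)
    have hgeom := ((hasSum_geometric_of_norm_lt_one hn).mul_left ((q ^ (n + 1)) ^ a)).div_const
      ((n : ℂ) + 1)
    rw [← div_eq_mul_inv] at hgeom
    refine hgeom.congr_fun fun k ↦ ?_
    simp only [Function.comp, Equiv.prodComm_apply, Prod.swap, ← pow_mul, ← pow_add]
    ring_nf

end LogProduct

/-- The generating function `∑ (n/5) xⁿ` of the Legendre symbol modulo `5`, in closed form. -/
noncomputable def legendreGen (x : ℂ) : ℂ := (x - x ^ 2 - x ^ 3 + x ^ 4) / (1 - x ^ 5)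

/-- The logarithm of the product `(q, q⁴; q⁵)_∞ / (q², q³; q⁵)_∞`, as a Lambert series. -/
noncomputable def rrLog (q : ℂ) : ℂ := -∑' n : ℕ, legendreGen (q ^ (n + 1)) / ((n : ℂ) + 1)

lemma exists_hasSum_log_rrProd {q : ℂ} (hq : ‖q‖ < 1) :
    ∃ T : ℂ, HasSum (fun n : ℕ ↦ legendreGen (q ^ (n + 1)) / ((n : ℂ) + 1)) T ∧
      HasSum (fun k : ℕ ↦ log (1 - q ^ (5 * k + 1)) + log (1 - q ^ (5 * k + 4)) -
        (log (1 - q ^ (5 * k + 2)) + log (1 - q ^ (5 * k + 3)))) (-T) := by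
  have h5 : 5 ≠ 0 := OfNat.ofNat_ne_zero 5
  obtain ⟨T₁, hlog₁, hsum₁⟩ := exists_hasSum_log_one_sub_pow hq h5 one_ne_zero
  obtain ⟨T₂, hlog₂, hsum₂⟩ := exists_hasSum_log_one_sub_pow hq h5 two_ne_zero
  obtain ⟨T₃, hlog₃, hsum₃⟩ := exists_hasSum_log_one_sub_pow hq h5 three_ne_zero
  obtain ⟨T₄, hlog₄, hsum₄⟩ := exists_hasSum_log_one_sub_pow hq h5 four_ne_zero
  refine ⟨T₁ - T₂ - T₃ + T₄, ?_, ?_⟩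
  · refine (((hsum₁.sub hsum₂).sub hsum₃).add hsum₄).congr_fun fun n ↦ ?_
    simp only [legendreGen]
    ring
  · rw [show -(T₁ - T₂ - T₃ + T₄) = -T₁ + -T₄ - (-T₂ + -T₃) by ring]
    exact (hlog₁.add hlog₄).sub (hlog₂.add hlog₃)

lemma summable_legendreGen_pow_div {q : ℂ} (hq : ‖q‖ < 1) :
    Summable fun n : ℕ ↦ legendreGen (q ^ (n + 1)) / ((n : ℂ) + 1) :=
  let ⟨_, hsum, _⟩ := exists_hasSum_log_rrProd hq
  hsum.summable

lemma rrProd_eq_exp_rrLog {q : ℂ} (hq : ‖q‖ < 1) :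
    ∏' k : ℕ, ((1 - q ^ (5 * k + 1)) * (1 - q ^ (5 * k + 4))) /
      ((1 - q ^ (5 * k + 2)) * (1 - q ^ (5 * k + 3))) = exp (rrLog q) := by
  obtain ⟨T, hsum, hlog⟩ := exists_hasSum_log_rrProd hq
  rw [rrLog, hsum.tsum_eq, ← hlog.cexp.tprod_eq]
  congr 1 with k
  have hne (a : ℕ) (ha : a ≠ 0) : 1 - q ^ (5 * k + a) ≠ 0 := by
    apply one_sub_ne_zero_of_norm_lt_one
    rw [norm_pow]
    exact pow_lt_one₀ (norm_nonneg q) hq (by lia)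
  simp only [Function.comp, exp_sub, exp_add]
  rw [exp_log (hne 1 one_ne_zero), exp_log (hne 2 two_ne_zero), exp_log (hne 3 three_ne_zero),
    exp_log (hne 4 four_ne_zero)]

lemma rrLog_conj (q : ℂ) : rrLog (starRingEnd ℂ q) = starRingEnd ℂ (rrLog q) := by
  simp [rrLog, legendreGen, conj_tsum]

section GaussSum

open ZMod

lemma stdAddChar_add_stdAddChar_neg {N : ℕ} [NeZero N] (j : ℤ) :
    stdAddChar (j : ZMod N) + stdAddChar (-(j : ZMod N)) =
      ((2 * Real.cos (2 * Real.pi * j / N) : ℝ) : ℂ) := by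
  rw [← Int.cast_neg, stdAddChar_coe, stdAddChar_coe]
  push_cast
  rw [two_cos]
  ring_nf

lemma cos_two_mul_pi_div_five : Real.cos (2 * Real.pi / 5) = (√5 - 1) / 4 := by
  rw [mul_div_assoc, Real.cos_two_mul, Real.cos_pi_div_five]
  linear_combination Real.sq_sqrt (show (0 : ℝ) ≤ 5 by norm_num) / 8

lemma cos_four_mul_pi_div_five : Real.cos (4 * Real.pi / 5) = -(√5 + 1) / 4 := by
  rw [show 4 * Real.pi / 5 = Real.pi - Real.pi / 5 by ring, Real.cos_pi_sub, Real.cos_pi_div_five]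
  ring

instance fact_natPrime_five : Fact (Nat.Prime 5) := ⟨Nat.prime_five⟩

lemma sum_zmod_five {M : Type*} [AddCommMonoid M] (f : ZMod 5 → M) :
    ∑ j, f j = f 0 + f 1 + f 2 + f 3 + f 4 :=
  Fin.sum_univ_five f

/-- The Legendre symbol modulo `5`, as a complex multiplicative character. -/
noncomputable def legendreChar : MulChar (ZMod 5) ℂ :=
  (quadraticChar (ZMod 5)).ringHomComp (Int.castRingHom ℂ)

@[simp] lemma legendreChar_zero : legendreChar 0 = 0 := MulChar.map_zero _

@[simp] lemma legendreChar_two : legendreChar 2 = -1 := by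
  have : quadraticCharFun (ZMod 5) 2 = -1 := by decide
  simp [legendreChar, this]

@[simp] lemma legendreChar_three : legendreChar 3 = -1 := by
  have : quadraticCharFun (ZMod 5) 3 = -1 := by decide
  simp [legendreChar, this]

@[simp] lemma legendreChar_four : legendreChar 4 = 1 := by
  have : quadraticCharFun (ZMod 5) 4 = 1 := by decide
  simp [legendreChar, this]

lemma legendreChar_neg (j : ZMod 5) : legendreChar (-j) = legendreChar j := by
  rw [neg_eq_neg_one_mul, map_mul, show (-1 : ZMod 5) = 4 from rfl, legendreChar_four, one_mul]

lemma sum_legendreChar : ∑ b, legendreChar b = 0 := by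
  simp [sum_zmod_five]

lemma gaussSum_legendreChar : gaussSum legendreChar stdAddChar = √5 := by
  have h₁ := stdAddChar_add_stdAddChar_neg (N := 5) 1
  have h₂ := stdAddChar_add_stdAddChar_neg (N := 5) 2
  rw [show (-((1 : ℤ) : ZMod 5)) = 4 from rfl, show 2 * Real.pi * (1 : ℤ) / (5 : ℕ) =
    2 * Real.pi / 5 by push_cast; ring, cos_two_mul_pi_div_five] at h₁
  rw [show (-((2 : ℤ) : ZMod 5)) = 3 from rfl, show 2 * Real.pi * (2 : ℤ) / (5 : ℕ) =
    4 * Real.pi / 5 by push_cast; ring, cos_four_mul_pi_div_five] at h₂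
  simp only [gaussSum, sum_zmod_five, legendreChar_zero, map_one, legendreChar_two,
    legendreChar_three, legendreChar_four]
  push_cast at h₁ h₂
  linear_combination h₁ - h₂

lemma sum_legendreChar_mul_stdAddChar (n : ZMod 5) :
    ∑ b, legendreChar b * stdAddChar (n * b) = √5 * legendreChar n := by
  rcases eq_or_ne n 0 with rfl | hn
  · simp [sum_legendreChar]
  · have hinv : legendreChar⁻¹ = legendreChar := ((quadraticChar_isQuadratic _).comp _).inv
    simpa [gaussSum, AddChar.mulShift_apply, hinv, ← gaussSum_legendreChar, mul_comm] using
      gaussSum_mulShift_eq legendreChar stdAddChar (Units.mk0 n hn)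

lemma legendreChar_eq_cos_sub_cos (n : ℤ) :
    √5 * legendreChar n =
      ((2 * Real.cos (2 * Real.pi * n / 5) - 2 * Real.cos (4 * Real.pi * n / 5) : ℝ) : ℂ) := by
  have h₁ := stdAddChar_add_stdAddChar_neg (N := 5) n
  have h₂ := stdAddChar_add_stdAddChar_neg (N := 5) (2 * n)
  have hneg : ∀ j : ZMod 5, j * 4 = -j ∧ j * 3 = -(2 * j) := by decide
  rw [← sum_legendreChar_mul_stdAddChar, sum_zmod_five]
  simp only [legendreChar_zero, map_one, legendreChar_two, legendreChar_three, legendreChar_four,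
    hneg, mul_one, mul_comm _ (2 : ZMod 5)]
  rw [show 4 * Real.pi * n / 5 = 2 * Real.pi * (2 * n : ℤ) / (5 : ℕ) by push_cast; ring]
  push_cast at h₁ h₂ ⊢
  linear_combination h₁ - h₂

lemma stdAddChar_pow_card {N : ℕ} [NeZero N] (j : ZMod N) : stdAddChar j ^ N = 1 := by
  rw [← AddChar.map_nsmul_eq_pow, nsmul_eq_mul, CharP.cast_eq_zero, zero_mul,
    AddChar.map_zero_eq_one]

lemma norm_stdAddChar {N : ℕ} [NeZero N] (j : ZMod N) : ‖(stdAddChar j : ℂ)‖ = 1 :=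
  Circle.norm_coe _

lemma sqrt_five_mul_legendreGen {x : ℂ} (hx : x ^ 5 ≠ 1) :
    √5 * legendreGen x = ∑ b, legendreChar b / (1 - stdAddChar b * x) := by
  have hgeom (b : ZMod 5) : 1 / (1 - stdAddChar b * x) =
      (∑ n ∈ Finset.range 5, (stdAddChar b * x) ^ n) / (1 - x ^ 5) := by
    have hpow : (stdAddChar b * x) ^ 5 = x ^ 5 := by rw [mul_pow, stdAddChar_pow_card, one_mul]
    have hne : stdAddChar b * x ≠ 1 := fun h ↦ hx (by rw [← hpow, h, one_pow])
    rw [geom_sum_eq hne, hpow]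
    field_simp [sub_ne_zero.mpr hx.symm, sub_ne_zero.mpr hne, sub_ne_zero.mpr hne.symm]
    ring
  have hcoeff (n : ℕ) : ∑ b, legendreChar b * (stdAddChar b * x) ^ n =
      √5 * legendreChar n * x ^ n := by
    rw [← sum_legendreChar_mul_stdAddChar, Finset.sum_mul]
    refine Finset.sum_congr rfl fun b _ ↦ ?_
    rw [mul_pow, ← AddChar.map_nsmul_eq_pow, nsmul_eq_mul, mul_assoc]
  calc √5 * legendreGen x
      = (∑ n ∈ Finset.range 5, √5 * legendreChar n * x ^ n) / (1 - x ^ 5) := by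
        simp [Finset.sum_range_succ, legendreGen]
        ring
    _ = ∑ b, legendreChar b / (1 - stdAddChar b * x) := by
        simp only [← hcoeff, div_eq_mul_one_div (legendreChar _), hgeom]
        rw [Finset.sum_comm]
        simp only [Finset.mul_sum, mul_div_assoc', Finset.sum_div]

lemma hasSum_legendreChar_div_sq :
    HasSum (fun n : ℕ ↦ legendreChar (n + 1 : ℕ) / ((n : ℂ) + 1) ^ 2)
      ((4 * Real.pi ^ 2 / (25 * √5) : ℝ) : ℂ) := by
  have h := fun x hx ↦ hasSum_one_div_nat_pow_mul_cos (k := 1) one_ne_zero (x := x) hx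
  have hbernoulli (x : ℝ) :
      ((Polynomial.bernoulli (2 * 1)).map (algebraMap ℚ ℝ)).eval x = x ^ 2 - x + 1 / 6 := by
    simp [Polynomial.bernoulli, Finset.sum_range_succ, bernoulli_two, bernoulli_one]
    ring
  simp only [hbernoulli] at h
  have hsum := ((h (1 / 5) (by norm_num)).sub (h (2 / 5) (by norm_num))).mul_left (2 / √5)
  rw [← hasSum_nat_add_iff' 1] at hsum
  convert hasSum_ofReal.mpr hsum using 1
  · ext n
    have hcos := legendreChar_eq_cos_sub_cos (n + 1 : ℕ)
    have h5 : ((√5 : ℝ) : ℂ) ≠ 0 := by exact_mod_cast (by positivity : √(5 : ℝ) ≠ 0)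
    rw [Int.cast_natCast, mul_comm, ← eq_div_iff h5] at hcos
    rw [hcos]
    push_cast
    ring_nf
  · norm_num [Nat.factorial]
    field_simp
    norm_num

end GaussSum

section Sector

/-- The sector `‖t‖ ≤ K Re t` about the positive real axis, without its vertex. Measuring the
aperture by `‖t‖` rather than by `|Im t|` makes it empty for `K < 1`. -/
def sector (K : ℝ) : Set ℂ := {t | 0 < t.re ∧ ‖t‖ ≤ K * t.re}

variable {K : ℝ} {t : ℂ}

lemma norm_pos_of_mem_sector (ht : t ∈ sector K) : 0 < ‖t‖ :=
  ht.1.trans_le (re_le_norm t)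

lemma one_le_of_mem_sector (ht : t ∈ sector K) : 1 ≤ K :=
  le_of_mul_le_mul_right (by linarith [re_le_norm t, ht.2]) ht.1

lemma ofReal_mul_mem_sector {x : ℝ} (hx : 0 < x) (ht : t ∈ sector K) : (x : ℂ) * t ∈ sector K := by
  refine ⟨by rw [re_ofReal_mul]; exact mul_pos hx ht.1, ?_⟩
  rw [re_ofReal_mul, norm_mul, norm_real, Real.norm_of_nonneg hx.le]
  nlinarith [ht.2]

lemma mem_sector_of_norm_sub_le {z : ℂ} (ht : t ∈ sector K) (hz : ‖z - t‖ ≤ ‖t‖ / (2 * K)) :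
    z ∈ sector (2 * K + 1) := by
  have hK := one_le_of_mem_sector ht
  have hdist : ‖z - t‖ ≤ t.re / 2 := by
    refine hz.trans ?_
    rw [div_le_div_iff₀ (by positivity) two_pos]
    linarith [ht.2]
  have hre : t.re / 2 ≤ z.re := by
    have := (neg_le_abs _).trans ((abs_re_le_norm (z - t)).trans hdist)
    rw [sub_re] at this
    linarith
  refine ⟨by linarith [ht.1], ?_⟩
  calc ‖z‖ ≤ ‖t‖ + ‖z - t‖ := norm_le_norm_add_norm_sub' z t
    _ ≤ K * t.re + t.re / 2 := add_le_add ht.2 hdist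
    _ ≤ (2 * K + 1) * z.re := by nlinarith

lemma nhdsWithin_sector_le : 𝓝[sector K] (0 : ℂ) ≤ 𝓝[≠] 0 :=
  nhdsWithin_mono _ fun _ ht ↦ norm_pos_iff.mp (norm_pos_of_mem_sector ht)

lemma tendsto_ofReal_mul_nhdsWithin_sector {x : ℝ} (hx : 0 < x) :
    Tendsto (fun t : ℂ ↦ (x : ℂ) * t) (𝓝[sector K] 0) (𝓝[sector K] 0) :=
  tendsto_nhdsWithin_iff.mpr ⟨((continuous_const_mul (x : ℂ)).tendsto' 0 0 (mul_zero _)).mono_left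
    nhdsWithin_le_nhds, eventually_mem_nhdsWithin.mono fun _ ↦ ofReal_mul_mem_sector hx⟩

/-- `k` is holomorphic on the right half-plane and, on every sector, bounded and convergent to `d`
at the origin. These are the functions for which sums `∑ k(n s)/n` can be analysed as `s → 0`. -/
structure HasSectorLimit (k : ℂ → ℂ) (d : ℂ) : Prop where
  differentiableAt : ∀ t : ℂ, 0 < t.re → DifferentiableAt ℂ k t
  bounded : ∀ K : ℝ, ∃ C : ℝ, ∀ t ∈ sector K, ‖k t‖ ≤ C
  tendsto : ∀ K : ℝ, Tendsto k (𝓝[sector K] 0) (𝓝 d)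

namespace HasSectorLimit

variable {k : ℂ → ℂ} {d : ℂ}

lemma const_mul (c : ℂ) (h : HasSectorLimit k d) : HasSectorLimit (fun t ↦ c * k t) (c * d) where
  differentiableAt t ht := (h.differentiableAt t ht).const_mul c
  bounded K :=
    let ⟨C, hC⟩ := h.bounded K
    ⟨‖c‖ * C, fun t ht ↦ by rw [norm_mul]; gcongr; exact hC t ht⟩
  tendsto K := (h.tendsto K).const_mul c

lemma finset_sum {ι : Type*} {s : Finset ι} {k : ι → ℂ → ℂ} {d : ι → ℂ}
    (h : ∀ i ∈ s, HasSectorLimit (k i) (d i)) :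
    HasSectorLimit (fun t ↦ ∑ i ∈ s, k i t) (∑ i ∈ s, d i) where
  differentiableAt t ht := DifferentiableAt.fun_sum fun i hi ↦ (h i hi).differentiableAt t ht
  bounded K := by
    choose! C hC using fun i hi ↦ (h i hi).bounded K
    exact ⟨∑ i ∈ s, C i, fun t ht ↦ norm_sum_le_of_le s fun i hi ↦ hC i hi t ht⟩
  tendsto K := tendsto_finsetSum s fun i hi ↦ (h i hi).tendsto K

/-- Cauchy's estimate on a disc about `t` of radius comparable to `‖t‖`. -/
lemma exists_norm_deriv_le (h : HasSectorLimit k d) (K : ℝ) :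
    ∃ C : ℝ, ∀ t ∈ sector K, ‖deriv k t‖ * ‖t‖ ≤ C := by
  obtain ⟨C, hC⟩ := h.bounded (2 * K + 1)
  refine ⟨C * (2 * K), fun t ht ↦ ?_⟩
  have hK := one_le_of_mem_sector ht
  have ht0 := norm_pos_of_mem_sector ht
  have hmem {z : ℂ} (hz : z ∈ Metric.closedBall t (‖t‖ / (2 * K))) : z ∈ sector (2 * K + 1) :=
    mem_sector_of_norm_sub_le ht (mem_closedBall_iff_norm.mp hz)
  have hdiff : DiffContOnCl ℂ k (Metric.ball t (‖t‖ / (2 * K))) :=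
    DifferentiableOn.diffContOnCl fun z hz ↦ (h.differentiableAt z
      (hmem (Metric.closure_ball_subset_closedBall hz)).1).differentiableWithinAt
  have hcauchy := norm_deriv_le_of_forall_mem_sphere_norm_le (by positivity) hdiff
    fun z hz ↦ hC z (hmem (Metric.sphere_subset_closedBall hz))
  calc ‖deriv k t‖ * ‖t‖ ≤ C / (‖t‖ / (2 * K)) * ‖t‖ := by gcongr
    _ = C * (2 * K) := by field_simp

lemma exists_norm_div_sub_div_le (h : HasSectorLimit k d) (K : ℝ) :
    ∃ C : ℝ, ∀ s ∈ sector K, ∀ x y : ℝ, 0 < x → x ≤ y →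
      ‖k (y * s) / y - k (x * s) / x‖ ≤ C / x ^ 2 * (y - x) := by
  obtain ⟨C₀, hC₀⟩ := h.bounded K
  obtain ⟨C₁, hC₁⟩ := h.exists_norm_deriv_le K
  refine ⟨C₁ + C₀, fun s hs x y hx hxy ↦ ?_⟩
  have hderiv (u : ℝ) (hu : u ∈ Set.Icc x y) : HasDerivWithinAt (fun u : ℝ ↦ k (u * s) / u)
      ((deriv k (u * s) * s * u - k (u * s)) / u ^ 2) (Set.Icc x y) u := by
    have hu0 : 0 < u := hx.trans_le hu.1
    have hk := (h.differentiableAt _ (ofReal_mul_mem_sector hu0 hs).1).hasDerivAt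
    have hcomp := hk.comp (u : ℂ) ((hasDerivAt_id (u : ℂ)).mul_const s)
    have hdiv := hcomp.div (hasDerivAt_id (u : ℂ)) (ofReal_ne_zero.mpr hu0.ne')
    simpa using hdiv.comp_ofReal.hasDerivWithinAt
  have hbound (u : ℝ) (hu : u ∈ Set.Icc x y) :
      ‖(deriv k (u * s) * s * u - k (u * s)) / u ^ 2‖ ≤ (C₁ + C₀) / x ^ 2 := by
    have hu0 : 0 < u := hx.trans_le hu.1
    have hmem := ofReal_mul_mem_sector hu0 hs
    have hnum : ‖deriv k (u * s) * s * u - k (u * s)‖ ≤ C₁ + C₀ := by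
      refine (norm_sub_le _ _).trans (add_le_add ?_ (hC₀ _ hmem))
      simpa [mul_assoc, mul_comm, mul_left_comm] using hC₁ _ hmem
    rw [norm_div, norm_pow, norm_real, Real.norm_of_nonneg hu0.le]
    exact div_le_div₀ ((norm_nonneg _).trans hnum) hnum (by positivity) (by gcongr; exact hu.1)
  simpa [Real.norm_of_nonneg (sub_nonneg.mpr hxy)] using
    (convex_Icc x y).norm_image_sub_le_of_norm_hasDerivWithin_le hderiv hbound
      (Set.left_mem_Icc.mpr hxy) (Set.right_mem_Icc.mpr hxy)

lemma tendsto_mul_div (h : HasSectorLimit k d) (K : ℝ) {x : ℝ} (hx : 0 < x) :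
    Tendsto (fun s : ℂ ↦ k (x * s) / x) (𝓝[sector K] 0) (𝓝 (d / x)) :=
  ((h.tendsto K).comp (tendsto_ofReal_mul_nhdsWithin_sector hx)).div_const _

end HasSectorLimit

lemma tsum_eq_tsum_sum_zmod {f : ℕ → ℂ} (hf : Summable f) (N : ℕ) [NeZero N] :
    ∑' n, f n = ∑' m, ∑ j : ZMod N, f (j.val + N * m) := by
  rw [Nat.sumByResidueClasses hf N, Summable.tsum_finsetSum]
  intro j _
  exact hf.comp_injective fun m n hmn ↦ by simpa [NeZero.ne N] using hmn

lemma exists_norm_sum_zmod_div_le {N : ℕ} [NeZero N] {k : ZMod N → ℂ → ℂ} {δ : ZMod N → ℂ}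
    (hk : ∀ j, HasSectorLimit (k j) (δ j)) (hsum : ∀ t, ∑ j, k j t = 0) (K : ℝ) :
    ∃ C : ℝ, ∀ s ∈ sector K, ∀ m : ℕ,
      ‖∑ j : ZMod N, k (j + 1) ((j.val + N * m + 1 : ℝ) * s) / (j.val + N * m + 1 : ℝ)‖ ≤
        C * (1 / ((m + 1 : ℕ) : ℝ) ^ 2) := by
  choose C hC using fun j ↦ (hk j).exists_norm_div_sub_div_le K
  refine ⟨∑ j : ZMod N, |C (j + 1)| * N, fun s hs m ↦ ?_⟩
  have hend : ∑ j : ZMod N, k (j + 1) ((N * m + N : ℝ) * s) / (N * m + N : ℝ) = 0 := by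
    have := (Equiv.sum_comp (Equiv.addRight 1) _).trans (hsum ((N * m + N : ℝ) * s))
    rw [← Finset.sum_div]
    simp_all
  rw [← sub_zero (∑ j, _), ← hend, ← Finset.sum_sub_distrib, Finset.sum_mul]
  refine norm_sum_le_of_le _ fun j _ ↦ ?_
  have hj : (j.val : ℝ) + 1 ≤ N := by exact_mod_cast ZMod.val_lt j
  have hm : ((m + 1 : ℕ) : ℝ) ≤ j.val + N * m + 1 := by
    exact_mod_cast Nat.succ_le_succ (le_add_left (Nat.le_mul_of_pos_left m (NeZero.pos N)))
  rw [norm_sub_rev]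
  calc _ ≤ C (j + 1) / (j.val + N * m + 1) ^ 2 * (N * m + N - (j.val + N * m + 1)) := by
        exact_mod_cast hC (j + 1) s hs (j.val + N * m + 1) (N * m + N) (by positivity)
          (by linarith)
    _ ≤ |C (j + 1)| / ((m + 1 : ℕ) : ℝ) ^ 2 * N := by
        gcongr
        · linarith
        · exact le_abs_self _
        · linarith [Nat.cast_nonneg (α := ℝ) j.val]
    _ = |C (j + 1)| * N * (1 / ((m + 1 : ℕ) : ℝ) ^ 2) := by ring

/-- Tannery's theorem for the conditionally convergent limit: since the `k j` sum to zero, each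
block of `N` consecutive terms is `O(m⁻²)`, uniformly in a sector. -/
theorem tendsto_tsum_zmod_div {N : ℕ} [NeZero N] {k : ZMod N → ℂ → ℂ} {δ : ZMod N → ℂ}
    (hk : ∀ j, HasSectorLimit (k j) (δ j)) (hsum : ∀ t, ∑ j, k j t = 0) (K : ℝ)
    (hsummable : ∀ s ∈ sector K, Summable fun n : ℕ ↦ k (n + 1) ((n + 1 : ℝ) * s) / (n + 1 : ℝ)) :
    Tendsto (fun s : ℂ ↦ ∑' n : ℕ, k (n + 1) ((n + 1 : ℝ) * s) / (n + 1 : ℝ)) (𝓝[sector K] 0)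
      (𝓝 (∑' m : ℕ, ∑ j : ZMod N, δ (j + 1) / ((j.val + N * m + 1 : ℝ) : ℂ))) := by
  obtain ⟨C, hC⟩ := exists_norm_sum_zmod_div_le hk hsum K
  have hpser : Summable fun m : ℕ ↦ 1 / ((m + 1 : ℕ) : ℝ) ^ 2 :=
    (summable_nat_add_iff 1).mpr (Real.summable_one_div_nat_pow.mpr one_lt_two)
  refine (tendsto_tsum_of_dominated_convergence (hpser.mul_left _)
    (fun m ↦ tendsto_finsetSum _ fun j _ ↦ (hk (j + 1)).tendsto_mul_div K (by positivity))
    (eventually_mem_nhdsWithin.mono hC)).congr' ?_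
  filter_upwards [self_mem_nhdsWithin] with s hs
  rw [tsum_eq_tsum_sum_zmod (hsummable s hs) N]
  simp

end Sector

section GeometricPole

/-- `1 / (1 - w e^{-t})` for `‖w‖ = 1`, with the pole at `t = 0` (present only for `w = 1`)
subtracted. -/
noncomputable def geomRegular (w t : ℂ) : ℂ :=
  1 / (1 - w * exp (-t)) - if w = 1 then 1 / t else 0

/-- The value of `geomRegular w` at `t = 0`, in the limit. -/
noncomputable def geomLimit (w : ℂ) : ℂ := if w = 1 then 1 / 2 else 1 / (1 - w)

lemma tendsto_one_div_one_sub_exp_neg_sub_one_div :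
    Tendsto (fun t : ℂ ↦ 1 / (1 - exp (-t)) - 1 / t) (𝓝[≠] 0) (𝓝 (1 / 2)) := by
  have hneg : Tendsto (fun t : ℂ ↦ -t) (𝓝[≠] 0) (𝓝 0) :=
    (continuous_neg.tendsto' 0 0 neg_zero).mono_left nhdsWithin_le_nhds
  have hfirst : Tendsto (fun t : ℂ ↦ (1 - exp (-t)) / t) (𝓝[≠] 0) (𝓝 1) := by
    have h : HasDerivAt (fun t : ℂ ↦ 1 - exp (-t)) 1 0 := by
      simpa using ((hasDerivAt_neg (0 : ℂ)).cexp).const_sub 1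
    simpa [slope_fun_def_field] using h.tendsto_slope
  have hsecond : Tendsto (fun t : ℂ ↦ (exp (-t) - 1 + t) / t ^ 2) (𝓝[≠] 0) (𝓝 (1 / 2)) := by
    have h := ((exp_sub_sum_range_succ_isLittleO_pow 2).comp_tendsto hneg).tendsto_div_nhds_zero
    rw [← zero_add (1 / 2 : ℂ)]
    refine (h.add_const (1 / 2)).congr' ?_
    filter_upwards [self_mem_nhdsWithin] with t ht0
    have ht0 : t ≠ 0 := ht0
    simp only [Function.comp_apply, Finset.sum_range_succ, Finset.sum_range_zero, Nat.factorial]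
    field_simp
    ring
  have h := hsecond.div hfirst one_ne_zero
  rw [div_one] at h
  refine h.congr' ?_
  filter_upwards [hfirst.eventually_ne one_ne_zero, self_mem_nhdsWithin] with t ht ht0
  have ht0 : t ≠ 0 := ht0
  have hexp : 1 - exp (-t) ≠ 0 := fun h ↦ ht (by rw [h, zero_div])
  simp only [Pi.div_apply]
  field_simp
  ring

variable {w : ℂ}

lemma norm_mul_exp_neg (hw : ‖w‖ = 1) (t : ℂ) : ‖w * exp (-t)‖ = Real.exp (-t.re) := by
  rw [norm_mul, hw, one_mul, norm_exp, neg_re]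

lemma one_sub_mul_exp_neg_ne_zero (hw : ‖w‖ = 1) {t : ℂ} (ht : 0 < t.re) :
    1 - w * exp (-t) ≠ 0 :=
  one_sub_ne_zero_of_norm_lt_one (by
    rw [norm_mul_exp_neg hw, Real.exp_lt_one_iff]; exact neg_lt_zero.mpr ht)

lemma tendsto_geomRegular (w : ℂ) : Tendsto (geomRegular w) (𝓝[≠] 0) (𝓝 (geomLimit w)) := by
  rcases eq_or_ne w 1 with rfl | hw
  · simpa [funext (geomRegular.eq_1 1), geomLimit] using
      tendsto_one_div_one_sub_exp_neg_sub_one_div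
  · have hcont : ContinuousAt (fun t : ℂ ↦ 1 / (1 - w * exp (-t))) 0 := by
      refine ContinuousAt.div (by fun_prop) (by fun_prop) ?_
      simpa using sub_ne_zero.mpr hw.symm
    have h := hcont.tendsto.mono_left (nhdsWithin_le_nhds (s := {0}ᶜ))
    simpa [funext (geomRegular.eq_1 w), geomLimit, hw] using h

lemma norm_geomRegular_le (hw : ‖w‖ = 1) {t : ℂ} {δ : ℝ} (hδ : 0 < δ) (ht : δ ≤ t.re) :
    ‖geomRegular w t‖ ≤ 1 / (1 - Real.exp (-δ)) + 1 / δ := by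
  have hpos : 0 < 1 - Real.exp (-δ) := by rw [sub_pos, Real.exp_lt_one_iff]; linarith
  have hden : 1 - Real.exp (-δ) ≤ ‖1 - w * exp (-t)‖ :=
    calc 1 - Real.exp (-δ) ≤ 1 - Real.exp (-t.re) := by gcongr
      _ ≤ ‖1 - w * exp (-t)‖ := by
        simpa only [norm_mul_exp_neg hw, norm_one] using norm_sub_norm_le 1 (w * exp (-t))
  refine norm_sub_le_of_le ?_ ?_
  · rw [norm_div, norm_one]
    exact one_div_le_one_div_of_le hpos hden
  · split_ifs
    · rw [norm_div, norm_one]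
      exact one_div_le_one_div_of_le hδ (ht.trans (re_le_norm t))
    · rw [norm_zero]
      positivity

lemma hasSectorLimit_geomRegular (hw : ‖w‖ = 1) :
    HasSectorLimit (geomRegular w) (geomLimit w) where
  differentiableAt t ht := by
    have h₁ := one_sub_mul_exp_neg_ne_zero hw ht
    have h₂ : t ≠ 0 := fun h ↦ by simp [h] at ht
    unfold geomRegular
    split_ifs <;> fun_prop (disch := assumption)
  bounded K := by
    have hlim := (tendsto_geomRegular w).mono_left (nhdsWithin_sector_le (K := K))
    obtain ⟨δ, hδ, hnear⟩ := Metric.eventually_nhds_iff_ball.mp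
      (eventually_nhdsWithin_iff.mp (hlim.norm.eventually_lt_const (lt_add_one _)))
    refine ⟨max (‖geomLimit w‖ + 1) (1 / (1 - Real.exp (-(δ / K))) + 1 / (δ / K)),
      fun t ht ↦ le_max_iff.mpr ?_⟩
    rcases lt_or_ge ‖t‖ δ with h | h
    · exact .inl (hnear t (mem_ball_zero_iff.mpr h) ht).le
    · have hK : 0 < K := one_pos.trans_le (one_le_of_mem_sector ht)
      exact .inr (norm_geomRegular_le hw (by positivity)
        ((div_le_iff₀' hK).mpr (h.trans ht.2)))
  tendsto K := (tendsto_geomRegular w).mono_left nhdsWithin_sector_le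

end GeometricPole

section Cotangent

lemma hasSum_one_div_add_sub_one_div_add_one {x : ℝ} (hx : 0 < x) :
    HasSum (fun m : ℕ ↦ 1 / (m + x) - 1 / (m + 1 + x)) (1 / x) := by
  rw [hasSum_iff_tendsto_nat_of_nonneg fun m ↦ sub_nonneg.mpr (by gcongr; linarith)]
  have htel (n : ℕ) : ∑ m ∈ Finset.range n, (1 / (m + x) - 1 / (m + 1 + x)) =
      1 / x - 1 / (n + x) := by
    simpa using Finset.sum_range_sub' (fun m : ℕ ↦ 1 / (m + x)) n
  refine Tendsto.congr (fun n ↦ (htel n).symm) ?_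
  simpa using ((tendsto_atTop_add_const_right _ x
    tendsto_natCast_atTop_atTop).inv_tendsto_atTop).const_sub x⁻¹

lemma hasSum_one_div_add_sub_one_div_sub {x : ℝ} (hx₀ : 0 < x) (hx₁ : x < 1) :
    HasSum (fun m : ℕ ↦ 1 / ((m + x : ℝ) : ℂ) - 1 / ((m + 1 - x : ℝ) : ℂ))
      (Real.pi * cot (Real.pi * x)) := by
  have hx : (x : ℂ) ∈ integerComplement := by
    rw [mem_integerComplement_iff]
    rintro ⟨n, hn⟩
    have hn : (n : ℝ) = x := by exact_mod_cast hn
    rw [← hn] at hx₀ hx₁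
    norm_cast at hx₀ hx₁
    lia
  have hcot := (summable_cotTerm hx).hasSum
  rw [← cot_series_rep' hx] at hcot
  have htel := hasSum_ofReal.mpr (hasSum_one_div_add_sub_one_div_add_one hx₀)
  convert hcot.add htel using 1
  · ext m
    rw [cotTerm, ← neg_sub (m + 1 : ℂ) x, one_div_neg_eq_neg_one_div]
    push_cast
    ring
  · push_cast
    ring

end Cotangent

section MajorArc

open ZMod

lemma sum_legendreChar_mul_comp_add (f : ZMod 5 → ℂ) :
    ∑ n, ∑ b, legendreChar b * f (b + 2 * n) = 0 := by
  have hshift (b : ZMod 5) : ∑ n, f (b + 2 * n) = ∑ j, f j :=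
    Equiv.sum_comp ((Equiv.mulLeft₀ (2 : ZMod 5) (by decide)).trans (Equiv.addLeft b)) f
  rw [Finset.sum_comm]
  simp only [← Finset.mul_sum, hshift, ← Finset.sum_mul, sum_legendreChar, zero_mul]

lemma tsum_sum_zmod_five_div_of_odd {δ : ZMod 5 → ℂ} (hδ : ∀ j, δ (-j) = -δ j) :
    ∑' m : ℕ, ∑ j : ZMod 5, δ (j + 1) / ((j.val + (5 : ℕ) * m + 1 : ℝ) : ℂ) =
      Real.pi / 5 * (δ 1 * cot (Real.pi * (1 / 5 : ℝ)) + δ 2 * cot (Real.pi * (2 / 5 : ℝ))) := by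
  have hδ₀ : δ 0 = 0 := self_eq_neg.mp (by simpa using hδ 0)
  have hsum := (((hasSum_one_div_add_sub_one_div_sub (x := 1 / 5) (by norm_num)
    (by norm_num)).mul_left (δ 1 / 5)).add ((hasSum_one_div_add_sub_one_div_sub (x := 2 / 5)
    (by norm_num) (by norm_num)).mul_left (δ 2 / 5))).tsum_eq
  rw [show Real.pi / 5 * (δ 1 * cot (Real.pi * (1 / 5 : ℝ)) + δ 2 * cot (Real.pi * (2 / 5 : ℝ))) =
    δ 1 / 5 * (Real.pi * cot (Real.pi * (1 / 5 : ℝ))) +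
      δ 2 / 5 * (Real.pi * cot (Real.pi * (2 / 5 : ℝ))) by ring, ← hsum]
  refine tsum_congr fun m ↦ ?_
  have hdiv (c : ℂ) (x : ℝ) : c / ((5 * x : ℝ) : ℂ) = c / 5 * (1 / (x : ℂ)) := by
    push_cast; ring
  rw [sum_zmod_five, zero_add, show (1 + 1 : ZMod 5) = 2 from rfl,
    show (2 + 1 : ZMod 5) = -2 from rfl, show (3 + 1 : ZMod 5) = -1 from rfl,
    show (4 + 1 : ZMod 5) = 0 from rfl, hδ, hδ, hδ₀, zero_div, add_zero,
    show (0 : ZMod 5).val = 0 from rfl, show (1 : ZMod 5).val = 1 from rfl,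
    show (2 : ZMod 5).val = 2 from rfl, show (3 : ZMod 5).val = 3 from rfl]
  rw [show (((0 : ℕ) : ℝ) + (5 : ℕ) * m + 1) = 5 * (m + 1 / 5) by push_cast; ring,
    show (((1 : ℕ) : ℝ) + (5 : ℕ) * m + 1) = 5 * (m + 2 / 5) by push_cast; ring,
    show (((2 : ℕ) : ℝ) + (5 : ℕ) * m + 1) = 5 * (m + 1 - 2 / 5) by push_cast; ring,
    show (((3 : ℕ) : ℝ) + (5 : ℕ) * m + 1) = 5 * (m + 1 - 1 / 5) by push_cast; ring]
  simp only [hdiv]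
  ring

/-- The regular part of `√5 * legendreGen (q ^ n)` at `q = ψ(2) e^{-s}`, in the variable
`t = n s`; it depends on `n` modulo `5` only. -/
noncomputable def rrRegular (n : ZMod 5) (t : ℂ) : ℂ :=
  ∑ b, legendreChar b * geomRegular (stdAddChar (b + 2 * n)) t

/-- The value of `rrRegular n` at `t = 0`, in the limit. -/
noncomputable def rrRegularLimit (n : ZMod 5) : ℂ :=
  ∑ b, legendreChar b * geomLimit (stdAddChar (b + 2 * n))

lemma hasSectorLimit_rrRegular (n : ZMod 5) :
    HasSectorLimit (rrRegular n) (rrRegularLimit n) :=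
  .finset_sum fun _ _ ↦ (hasSectorLimit_geomRegular (norm_stdAddChar _)).const_mul _

lemma stdAddChar_eq_one_iff {N : ℕ} [NeZero N] {j : ZMod N} :
    (stdAddChar j : ℂ) = 1 ↔ j = 0 := by
  rw [← AddChar.map_zero_eq_one (stdAddChar (N := N)), injective_stdAddChar.eq_iff]

lemma geomLimit_stdAddChar {j : ZMod 5} (hj : j ≠ 0) {r : ℝ}
    (hr : (stdAddChar j : ℂ) = exp (2 * Real.pi * I * r)) :
    geomLimit (stdAddChar j) = 1 / 2 + I / 2 * cot (Real.pi * r) := by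
  have h₁ : (stdAddChar j : ℂ) ≠ 1 := mt stdAddChar_eq_one_iff.mp hj
  rw [cot_pi_eq_exp_ratio, ← hr, geomLimit, if_neg h₁]
  field_simp [sub_ne_zero.mpr h₁.symm]
  ring

lemma geomLimit_inv {w : ℂ} (hw : w ≠ 0) : geomLimit w⁻¹ = 1 - geomLimit w := by
  unfold geomLimit
  by_cases h : w = 1
  · norm_num [h]
  · have h₁ : 1 - w ≠ 0 := sub_ne_zero.mpr (Ne.symm h)
    have h₂ : w - 1 ≠ 0 := sub_ne_zero.mpr h
    rw [if_neg h, if_neg (inv_ne_one.mpr h)]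
    field_simp
    ring

lemma geomLimit_stdAddChar_neg (j : ZMod 5) :
    geomLimit (stdAddChar (-j)) = 1 - geomLimit (stdAddChar j) := by
  rw [AddChar.map_neg_eq_inv, geomLimit_inv (norm_pos_iff.mp (by simp))]

lemma rrRegularLimit_neg (n : ZMod 5) : rrRegularLimit (-n) = -rrRegularLimit n := by
  have hneg (b : ZMod 5) : legendreChar (-b) * geomLimit (stdAddChar (-b + 2 * -n)) =
      legendreChar b - legendreChar b * geomLimit (stdAddChar (b + 2 * n)) := by
    rw [legendreChar_neg, show -b + 2 * -n = -(b + 2 * n) by ring, geomLimit_stdAddChar_neg]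
    ring
  rw [rrRegularLimit, ← Equiv.sum_comp (Equiv.neg _)]
  simp only [Equiv.neg_apply, hneg, Finset.sum_sub_distrib, sum_legendreChar, zero_sub,
    rrRegularLimit]

lemma cot_pi_div_five_sq_sub :
    Real.cot (Real.pi / 5) ^ 2 - Real.cot (Real.pi / 5) * Real.cot (2 * Real.pi / 5) -
      Real.cot (2 * Real.pi / 5) ^ 2 = 3 / √5 := by
  have h5 : √(5 : ℝ) ^ 2 = 5 := Real.sq_sqrt (by norm_num)
  have hsin : Real.sin (Real.pi / 5) ^ 2 = (5 - √5) / 8 := by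
    rw [Real.sin_sq, Real.cos_pi_div_five]
    linear_combination -h5 / 16
  have hsin2 : Real.sin (2 * Real.pi / 5) = 2 * Real.sin (Real.pi / 5) * ((1 + √5) / 4) := by
    rw [mul_div_assoc, Real.sin_two_mul, Real.cos_pi_div_five]
  have hs₀ : Real.sin (Real.pi / 5) ≠ 0 :=
    (Real.sin_pos_of_pos_of_lt_pi (by positivity) (by linarith [Real.pi_pos])).ne'
  have hne : 1 + √(5 : ℝ) ≠ 0 := by positivity
  have hne' : √(5 : ℝ) ≠ 0 := by positivity
  rw [Real.cot_eq_cos_div_sin, Real.cot_eq_cos_div_sin, hsin2, cos_two_mul_pi_div_five,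
    Real.cos_pi_div_five]
  field_simp
  rw [hsin]
  set x := √(5 : ℝ)
  have h3 : x ^ 3 = 5 * x := by rw [pow_succ, h5]
  have h4 : x ^ 4 = 25 := by rw [show x ^ 4 = (x ^ 2) ^ 2 by ring, h5]; norm_num
  have hx5 : x ^ 5 = 25 * x := by rw [pow_succ, h4]
  ring_nf
  simp only [h5, h3, h4, hx5]
  ring

lemma rrRegularLimit_one_two :
    rrRegularLimit 1 = I / 2 * (2 * Real.cot (Real.pi / 5) - Real.cot (2 * Real.pi / 5)) ∧
    rrRegularLimit 2 = -(I / 2 * (Real.cot (Real.pi / 5) + 2 * Real.cot (2 * Real.pi / 5))) := by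
  have h₀ : geomLimit (stdAddChar (0 : ZMod 5)) = 1 / 2 := by simp [geomLimit]
  have h₁ : geomLimit (stdAddChar (1 : ZMod 5)) = 1 / 2 + I / 2 * Real.cot (Real.pi / 5) := by
    rw [geomLimit_stdAddChar (r := 1 / 5) (by decide)
      (by simpa [div_eq_mul_inv] using stdAddChar_coe (N := 5) 1)]
    push_cast
    ring_nf
  have h₂ : geomLimit (stdAddChar (2 : ZMod 5)) = 1 / 2 + I / 2 * Real.cot (2 * Real.pi / 5) := by
    rw [geomLimit_stdAddChar (r := 2 / 5) (by decide)
      (by simpa [mul_div_assoc] using stdAddChar_coe (N := 5) 2)]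
    push_cast
    ring_nf
  have h₃ := geomLimit_stdAddChar_neg 2
  have h₄ := geomLimit_stdAddChar_neg 1
  rw [show (-2 : ZMod 5) = 3 from rfl, h₂] at h₃
  rw [show (-1 : ZMod 5) = 4 from rfl, h₁] at h₄
  have hadd : (1 + 2 : ZMod 5) = 3 ∧ (2 + 2 : ZMod 5) = 4 ∧ (3 + 2 : ZMod 5) = 0 ∧
    (4 + 2 : ZMod 5) = 1 ∧ (2 * 2 : ZMod 5) = 4 ∧ (1 + 4 : ZMod 5) = 0 ∧ (2 + 4 : ZMod 5) = 1 ∧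
    (3 + 4 : ZMod 5) = 2 ∧ (4 + 4 : ZMod 5) = 3 := by decide
  constructor <;>
  · simp only [rrRegularLimit, sum_zmod_five, legendreChar_zero, map_one, legendreChar_two,
      legendreChar_three, legendreChar_four, mul_one, hadd, h₀, h₁, h₂, h₃, h₄]
    ring

lemma tsum_sum_rrRegularLimit_div :
    ∑' m : ℕ, ∑ j : ZMod 5, rrRegularLimit (j + 1) / ((j.val + (5 : ℕ) * m + 1 : ℝ) : ℂ) =
      3 * √5 * Real.pi * I / 25 := by
  have hcot : (Real.cot (Real.pi / 5) ^ 2 - Real.cot (Real.pi / 5) * Real.cot (2 * Real.pi / 5) -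
      Real.cot (2 * Real.pi / 5) ^ 2 : ℂ) = 3 * √5 / 5 := by
    have h := cot_pi_div_five_sq_sub
    rw [← mul_div_mul_right 3 √5 (by positivity : √(5 : ℝ) ≠ 0),
      Real.mul_self_sqrt (by norm_num)] at h
    exact_mod_cast h
  obtain ⟨h₁, h₂⟩ := rrRegularLimit_one_two
  rw [tsum_sum_zmod_five_div_of_odd rrRegularLimit_neg, h₁, h₂]
  rw [← ofReal_mul, ← ofReal_cot, mul_one_div, ← ofReal_mul, ← ofReal_cot, mul_div_assoc',
    mul_comm Real.pi 2]
  linear_combination (Real.pi * I / 5) * hcot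

lemma sum_legendreChar_div_one_sub (n : ℕ) (s : ℂ) :
    ∑ b, legendreChar b / (1 - stdAddChar b * (stdAddChar (2 : ZMod 5) * exp (-s)) ^ n) =
      rrRegular n (n * s) - legendreChar n / (n * s) := by
  have hpow (b : ZMod 5) : stdAddChar b * (stdAddChar (2 : ZMod 5) * exp (-s)) ^ n =
      stdAddChar (b + 2 * n : ZMod 5) * exp (-(n * s)) := by
    rw [mul_pow, ← exp_nat_mul, ← AddChar.map_nsmul_eq_pow, nsmul_eq_mul, ← mul_assoc,
      ← AddChar.map_add_eq_mul, mul_comm (n : ZMod 5), mul_neg]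
  have hpole : ∑ b, legendreChar b * (if (stdAddChar (b + 2 * n : ZMod 5) : ℂ) = 1
      then 1 / (n * s) else 0) = -(legendreChar n / (n * s)) := by
    have hχ : legendreChar (-(2 * n)) = -legendreChar n := by
      rw [legendreChar_neg, map_mul, legendreChar_two, neg_one_mul]
    simp only [stdAddChar_eq_one_iff, add_eq_zero_iff_eq_neg, mul_ite, mul_zero,
      Finset.sum_ite_eq', Finset.mem_univ, if_true, hχ]
    ring
  rw [sub_eq_add_neg, ← hpole, rrRegular, ← Finset.sum_add_distrib]
  refine Finset.sum_congr rfl fun b _ ↦ ?_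
  rw [hpow, geomRegular]
  ring

lemma hasSum_rrRegular_div {s : ℂ} (hs : 0 < s.re) :
    HasSum (fun n : ℕ ↦ rrRegular (n + 1) ((n + 1 : ℝ) * s) / (n + 1 : ℝ))
      (-√5 * (rrLog (stdAddChar (2 : ZMod 5) * exp (-s)) -
        ((4 * Real.pi ^ 2 / 125 : ℝ) : ℂ) / s)) := by
  have hq : ‖stdAddChar (2 : ZMod 5) * exp (-s)‖ < 1 := by
    rw [norm_mul_exp_neg (norm_stdAddChar 2), Real.exp_lt_one_iff]
    linarith
  have hs₀ : s ≠ 0 := fun h ↦ by simp [h] at hs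
  have h5 : (√5 : ℂ) ≠ 0 := by exact_mod_cast (by positivity : √(5 : ℝ) ≠ 0)
  have h5' : (√5 : ℂ) ^ 2 = 5 := by exact_mod_cast Real.sq_sqrt (by norm_num : (0 : ℝ) ≤ 5)
  have hterm (n : ℕ) : rrRegular (n + 1) ((n + 1 : ℝ) * s) / (n + 1 : ℝ) =
      √5 * (legendreGen ((stdAddChar (2 : ZMod 5) * exp (-s)) ^ (n + 1)) / (n + 1)) +
        1 / s * (legendreChar (n + 1 : ℕ) / ((n : ℂ) + 1) ^ 2) := by
    have hn : (n : ℂ) + 1 ≠ 0 := n.cast_add_one_ne_zero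
    have hpow : ((stdAddChar (2 : ZMod 5) * exp (-s)) ^ (n + 1)) ^ 5 ≠ 1 := by
      rw [← pow_mul]
      refine fun h ↦ (pow_lt_one₀ (norm_nonneg _) hq (Nat.mul_ne_zero n.succ_ne_zero
        (by norm_num : 5 ≠ 0))).ne ?_
      rw [← norm_pow, h, norm_one]
    rw [mul_div_assoc', sqrt_five_mul_legendreGen hpow, sum_legendreChar_div_one_sub]
    push_cast
    field_simp
    ring
  have hval : -√5 * (rrLog (stdAddChar (2 : ZMod 5) * exp (-s)) -
      ((4 * Real.pi ^ 2 / 125 : ℝ) : ℂ) / s) =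
      √5 * ∑' n : ℕ, legendreGen ((stdAddChar (2 : ZMod 5) * exp (-s)) ^ (n + 1)) / (n + 1) +
        1 / s * ((4 * Real.pi ^ 2 / (25 * √5) : ℝ) : ℂ) := by
    rw [rrLog]
    push_cast
    field_simp
    rw [h5']
    ring
  rw [hval]
  exact (((summable_legendreGen_pow_div hq).hasSum.mul_left _).add
    (hasSum_legendreChar_div_sq.mul_left _)).congr_fun hterm

theorem tendsto_rrLog_sub_div (K : ℝ) :
    Tendsto (fun s ↦ rrLog (stdAddChar (2 : ZMod 5) * exp (-s)) -
      ((4 * Real.pi ^ 2 / 125 : ℝ) : ℂ) / s) (𝓝[sector K] 0) (𝓝 (-(3 * Real.pi * I / 25))) := by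
  have h5 : (√5 : ℂ) ≠ 0 := by exact_mod_cast (by positivity : √(5 : ℝ) ≠ 0)
  have h := (tendsto_tsum_zmod_div hasSectorLimit_rrRegular
    (fun t ↦ sum_legendreChar_mul_comp_add fun j ↦ geomRegular (stdAddChar j) t) K
    fun s hs ↦ (hasSum_rrRegular_div hs.1).summable).const_mul (-1 / √5 : ℂ)
  rw [tsum_sum_rrRegularLimit_div] at h
  convert h.congr' ?_ using 2
  · field_simp
  · filter_upwards [self_mem_nhdsWithin] with s hs
    rw [(hasSum_rrRegular_div hs.1).tsum_eq]
    field_simp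

end MajorArc

section MinorArc

open ZMod

lemma neg_norm_le_re_div_one_sub {w : ℂ} (hw : ‖w‖ < 1) : -‖w‖ ≤ (w / (1 - w)).re := by
  have hpos : 0 < normSq (1 - w) := normSq_pos.mpr (one_sub_ne_zero_of_norm_lt_one hw)
  have hnorm : normSq (1 - w) = 1 - 2 * w.re + ‖w‖ ^ 2 := by
    rw [← normSq_eq_norm_sq, normSq_sub]
    simp
    ring
  have hre : (w / (1 - w)).re = (w.re - ‖w‖ ^ 2) / normSq (1 - w) := by
    rw [← normSq_eq_norm_sq, normSq_apply, div_re, ← add_div]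
    simp only [sub_re, sub_im, one_re, one_im]
    ring
  obtain ⟨hlo, hhi⟩ := abs_le.mp (abs_re_le_norm w)
  rw [hre, le_div_iff₀ hpos, hnorm]
  have hr := norm_nonneg w
  -- The inequality is affine in `Re w`, hence reduces to the endpoints `Re w = ±‖w‖`.
  nlinarith [mul_nonneg (sub_nonneg.mpr hhi) hr, mul_nonneg (sub_nonneg.mpr hlo) hr,
    mul_nonneg (sub_nonneg.mpr hlo) (sub_nonneg.mpr hw.le), mul_nonneg hr (sub_nonneg.mpr hw.le),
    mul_nonneg (mul_nonneg hr hr) hr, mul_nonneg (mul_nonneg hr hr) (sub_nonneg.mpr hw.le)]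

lemma re_div_one_sub_le {w : ℂ} {δ : ℝ} (hδ : 0 < δ) (hw : δ ≤ ‖1 - w‖) :
    (w / (1 - w)).re ≤ ‖w‖ / δ := by
  refine (re_le_norm _).trans ?_
  rw [norm_div]
  gcongr

lemma norm_stdAddChar_mul {N : ℕ} [NeZero N] (j : ZMod N) (x : ℂ) : ‖stdAddChar j * x‖ = ‖x‖ := by
  rw [norm_mul, norm_stdAddChar, one_mul]

lemma neg_sqrt_five_mul_re_legendreGen_le {x : ℂ} (hx : ‖x‖ < 1) :
    -(√5 * (legendreGen x).re) ≤
      (stdAddChar (2 : ZMod 5) * x / (1 - stdAddChar (2 : ZMod 5) * x)).re +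
      (stdAddChar (3 : ZMod 5) * x / (1 - stdAddChar (3 : ZMod 5) * x)).re + 2 * ‖x‖ := by
  have hb (b : ZMod 5) : ‖stdAddChar b * x‖ < 1 := by rwa [norm_stdAddChar_mul]
  have hsplit (b : ZMod 5) : legendreChar b / (1 - stdAddChar b * x) =
      legendreChar b + legendreChar b * (stdAddChar b * x / (1 - stdAddChar b * x)) := by
    field_simp [one_sub_ne_zero_of_norm_lt_one (hb b)]
    ring
  have hx5 : x ^ 5 ≠ 1 := fun h ↦ (pow_lt_one₀ (norm_nonneg x) hx (by norm_num : 5 ≠ 0)).ne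
    (by rw [← norm_pow, h, norm_one])
  have h := congrArg re (sqrt_five_mul_legendreGen hx5)
  simp only [hsplit, Finset.sum_add_distrib, sum_legendreChar, zero_add] at h
  simp only [re_ofReal_mul, sum_zmod_five, legendreChar_zero, map_one, legendreChar_two,
    legendreChar_three, legendreChar_four, zero_mul, zero_add, one_mul, neg_one_mul, add_re,
    neg_re] at h
  have h₁ := neg_norm_le_re_div_one_sub (hb 1)
  have h₄ := neg_norm_le_re_div_one_sub (hb 4)
  rw [norm_stdAddChar_mul] at h₁ h₄
  linarith

lemma norm_exp_neg_add_mul_I (σ φ : ℝ) : ‖exp (-σ + φ * I)‖ = Real.exp (-σ) := by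
  simp [norm_exp]

lemma norm_sq_one_sub_exp (σ t : ℝ) : ‖1 - exp (-σ + t * I)‖ ^ 2 =
    (1 - Real.exp (-σ)) ^ 2 + 4 * Real.exp (-σ) * Real.sin (t / 2) ^ 2 := by
  have hcos : Real.cos t = 1 - 2 * Real.sin (t / 2) ^ 2 := by
    have h := Real.cos_two_mul (t / 2)
    rw [mul_div_cancel₀ t two_ne_zero] at h
    linarith [Real.sin_sq_add_cos_sq (t / 2)]
  rw [← normSq_eq_norm_sq, normSq_sub, normSq_eq_norm_sq, normSq_eq_norm_sq,
    norm_exp_neg_add_mul_I, ← exp_conj]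
  simp [exp_re, hcos]
  ring

lemma abs_div_pi_le_norm_one_sub_exp {σ t : ℝ} (hσ : σ ≤ 1) (ht : |t| ≤ Real.pi) :
    |t| / Real.pi ≤ ‖1 - exp (-σ + t * I)‖ := by
  have hsin : |t| / Real.pi ≤ |Real.sin (t / 2)| := by
    have h := Real.mul_abs_le_abs_sin (x := t / 2) (by rw [abs_div, abs_two]; linarith)
    rw [abs_div, abs_two] at h
    calc |t| / Real.pi = 2 / Real.pi * (|t| / 2) := by ring
      _ ≤ |Real.sin (t / 2)| := h
  have hexp : 1 / 4 ≤ Real.exp (-σ) := by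
    have := Real.exp_neg_one_gt_d9
    linarith [Real.exp_le_exp.mpr (neg_le_neg hσ)]
  refine hsin.trans (abs_le_of_sq_le_sq ?_ (norm_nonneg _))
  rw [norm_sq_one_sub_exp]
  nlinarith [sq_nonneg (1 - Real.exp (-σ)), sq_nonneg (Real.sin (t / 2))]

lemma stdAddChar_mul_exp {N : ℕ} [NeZero N] (j : ℤ) (σ φ : ℝ) :
    stdAddChar (j : ZMod N) * exp (-σ + φ * I) =
      exp (-σ + (φ + 2 * Real.pi * j / N : ℝ) * I) := by
  rw [stdAddChar_coe, ← exp_add]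
  push_cast
  ring_nf

lemma one_div_eight_le_norm_one_sub_or {x : ℂ} (hx : ‖x‖ < 1) :
    1 / 8 ≤ ‖1 - stdAddChar (2 : ZMod 5) * x‖ ∨ 1 / 8 ≤ ‖1 - stdAddChar (3 : ZMod 5) * x‖ := by
  by_contra! ⟨h₂, h₃⟩
  have hgap : 2 / 5 ≤ ‖1 - (stdAddChar (1 : ZMod 5) : ℂ)‖ := by
    have hpi := Real.pi_pos
    have ht : |2 * Real.pi / 5| = 2 * Real.pi / 5 := abs_of_pos (by positivity)
    have h := abs_div_pi_le_norm_one_sub_exp zero_le_one (t := 2 * Real.pi / 5)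
      (by rw [ht]; linarith)
    have hψ := stdAddChar_mul_exp (N := 5) 1 0 0
    norm_num at h hψ
    rw [← hψ, ht] at h
    field_simp at h
    linarith
  have hnorm : 7 / 8 ≤ ‖x‖ := by
    have := norm_sub_norm_le (1 : ℂ) (stdAddChar (2 : ZMod 5) * x)
    rw [norm_stdAddChar_mul, norm_one] at this
    linarith
  have hdiff : 2 / 5 * ‖x‖ ≤
      ‖1 - stdAddChar (2 : ZMod 5) * x‖ + ‖1 - stdAddChar (3 : ZMod 5) * x‖ :=
    calc 2 / 5 * ‖x‖ ≤ ‖1 - (stdAddChar (1 : ZMod 5) : ℂ)‖ * ‖x‖ := by gcongr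
      _ = ‖stdAddChar (2 : ZMod 5) * ((1 - stdAddChar (1 : ZMod 5)) * x)‖ := by
        rw [norm_stdAddChar_mul, norm_mul]
      _ = ‖(1 - stdAddChar (3 : ZMod 5) * x) - (1 - stdAddChar (2 : ZMod 5) * x)‖ := by
        rw [show (3 : ZMod 5) = 2 + 1 from rfl, AddChar.map_add_eq_mul]
        ring_nf
      _ ≤ _ := (norm_sub_le _ _).trans_eq (add_comm _ _)
  linarith

lemma neg_sqrt_five_mul_re_legendreGen_le_of_norm_eq {x : ℂ} {t : ℝ} (ht : 0 < t)
    (hx : ‖x‖ = Real.exp (-t)) : -(√5 * (legendreGen x).re) ≤ 1 / t + 10 / √t := by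
  have hexp := Real.add_one_le_exp t
  have hlt : ‖x‖ < 1 := by rw [hx, Real.exp_lt_one_iff]; linarith
  have hmul : ‖x‖ * Real.exp t = 1 := by rw [hx, ← Real.exp_add, neg_add_cancel, Real.exp_zero]
  have hgeom : ‖x‖ / (1 - ‖x‖) ≤ 1 / t := by
    rw [div_le_div_iff₀ (by linarith) ht]
    nlinarith [norm_nonneg x]
  have hsqrt : ‖x‖ ≤ 1 / √t := by
    rw [le_div_iff₀ (Real.sqrt_pos.mpr ht)]
    have : √t ≤ t + 1 := Real.sqrt_le_iff.mpr ⟨by positivity, by nlinarith⟩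
    nlinarith [norm_nonneg x]
  have hpole (b : ZMod 5) :
      (stdAddChar b * x / (1 - stdAddChar b * x)).re ≤ ‖x‖ / (1 - ‖x‖) := by
    have h := norm_sub_norm_le (1 : ℂ) (stdAddChar b * x)
    rw [norm_one, norm_stdAddChar_mul] at h
    simpa only [norm_stdAddChar_mul] using re_div_one_sub_le (sub_pos.mpr hlt) h
  have hfar {b : ZMod 5} (hb : 1 / 8 ≤ ‖1 - stdAddChar b * x‖) :
      (stdAddChar b * x / (1 - stdAddChar b * x)).re ≤ 8 * ‖x‖ := by
    have h := re_div_one_sub_le (by norm_num) hb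
    rw [norm_stdAddChar_mul] at h
    linarith
  have hsum := neg_sqrt_five_mul_re_legendreGen_le hlt
  rw [show 10 / √t = 10 * (1 / √t) by ring]
  rcases one_div_eight_le_norm_one_sub_or hlt with h | h
  · linarith [hpole 3, hfar h]
  · linarith [hpole 2, hfar h]

lemma neg_sqrt_five_mul_re_legendreGen_exp_le {σ φ : ℝ} (hσ₀ : 0 < σ) (hσ₁ : σ ≤ 1)
    (hφ : φ ∈ Set.Icc 0 Real.pi) (hfar : 100 * σ ≤ |φ - 4 * Real.pi / 5|) :
    -(√5 * (legendreGen (exp (-σ + φ * I))).re) ≤ Real.pi / (100 * σ) + 7 := by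
  obtain ⟨hφ₀, hφ₁⟩ := hφ
  have hpi := Real.pi_pos
  have hlt : ‖exp (-σ + φ * I)‖ < 1 := by
    rw [norm_exp_neg_add_mul_I, Real.exp_lt_one_iff]; linarith
  have hpole (j : ℤ) {t : ℝ} (ht : t = φ + 2 * Real.pi * j / 5) (htpi : |t| ≤ Real.pi) :
      |t| / Real.pi ≤ ‖1 - stdAddChar (j : ZMod 5) * exp (-σ + φ * I)‖ := by
    have h := stdAddChar_mul_exp (N := 5) j σ φ
    rw [Nat.cast_ofNat, ← ht] at h
    exact h ▸ abs_div_pi_le_norm_one_sub_exp hσ₁ htpi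
  have h₂ : 1 / 5 ≤ ‖1 - stdAddChar (2 : ZMod 5) * exp (-σ + φ * I)‖ := by
    rcases le_total φ (Real.pi / 5) with h | h
    · have ht : |φ + 4 * Real.pi / 5| = φ + 4 * Real.pi / 5 := abs_of_nonneg (by positivity)
      refine le_trans ?_ (hpole 2 (t := φ + 4 * Real.pi / 5) (by push_cast; ring)
        (by rw [ht]; linarith))
      rw [ht, le_div_iff₀ hpi]
      linarith
    · have ht : |φ - 6 * Real.pi / 5| = 6 * Real.pi / 5 - φ := by
        rw [abs_of_nonpos (by linarith), neg_sub]
      refine le_trans ?_ (hpole (-3) (t := φ - 6 * Real.pi / 5) (by push_cast; ring)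
        (by rw [ht]; linarith))
      rw [ht, le_div_iff₀ hpi]
      linarith
  have h₃ : 100 * σ / Real.pi ≤ ‖1 - stdAddChar (3 : ZMod 5) * exp (-σ + φ * I)‖ := by
    refine le_trans ?_ (hpole (-2) (t := φ - 4 * Real.pi / 5) (by push_cast; ring)
      (abs_le.mpr ⟨by linarith, by linarith⟩))
    gcongr
  have hre₂ := re_div_one_sub_le (by norm_num) h₂
  have hre₃ := re_div_one_sub_le (by positivity) h₃
  rw [norm_stdAddChar_mul] at hre₂ hre₃
  have hre₃' : ‖exp (-σ + φ * I)‖ / (100 * σ / Real.pi) ≤ Real.pi / (100 * σ) :=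
    (div_le_div_of_nonneg_right hlt.le (by positivity)).trans_eq (one_div_div _ _)
  linarith [neg_sqrt_five_mul_re_legendreGen_le hlt]

lemma exists_sqrt_five_mul_re_rrLog_le :
    ∃ Z : ℝ, ∀ {σ : ℝ} {q : ℂ}, 0 < σ → ‖q‖ = Real.exp (-σ) →
      √5 * (rrLog q).re ≤
        -(√5 * (legendreGen q).re) + (Real.pi ^ 2 / 6 - 1) / σ + 10 * Z / √σ := by
  have hzeta₂ : HasSum (fun n : ℕ ↦ 1 / ((n : ℝ) + 2) ^ 2) (Real.pi ^ 2 / 6 - 1) := by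
    simpa [Finset.sum_range_succ] using (hasSum_nat_add_iff' 2).mpr hasSum_zeta_two
  have hzeta₃ : Summable fun n : ℕ ↦ 1 / ((n : ℝ) + 2) ^ (3 / 2 : ℝ) := by
    simpa using (summable_nat_add_iff 2).mpr
      (Real.summable_one_div_nat_rpow.mpr (by norm_num : (1 : ℝ) < 3 / 2))
  refine ⟨∑' n : ℕ, 1 / ((n : ℝ) + 2) ^ (3 / 2 : ℝ), fun {σ q} hσ hq ↦ ?_⟩
  have hlt : ‖q‖ < 1 := by rw [hq, Real.exp_lt_one_iff]; linarith
  have hlog : HasSum (fun n : ℕ ↦ -(√5 * (legendreGen (q ^ (n + 1))).re) / ((n : ℝ) + 1))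
      (√5 * (rrLog q).re) := by
    refine ((hasSum_re (summable_legendreGen_pow_div hlt).hasSum.neg).mul_left √5).congr_fun
      fun n ↦ ?_
    rw [neg_re, show ((n : ℂ) + 1) = ((n + 1 : ℝ) : ℂ) by push_cast; rfl, div_ofReal_re]
    ring
  rw [← hasSum_nat_add_iff' 1] at hlog
  have hbound := (hzeta₂.mul_left (1 / σ)).add (hzeta₃.hasSum.mul_left (10 / √σ))
  have hterm (n : ℕ) : -(√5 * (legendreGen (q ^ (n + 1 + 1))).re) / (((n + 1 : ℕ) : ℝ) + 1) ≤
      1 / σ * (1 / ((n : ℝ) + 2) ^ 2) + 10 / √σ * (1 / ((n : ℝ) + 2) ^ (3 / 2 : ℝ)) := by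
    have hn : (0 : ℝ) < n + 2 := by positivity
    have hpow : ‖q ^ (n + 1 + 1)‖ = Real.exp (-((n + 2) * σ)) := by
      rw [norm_pow, hq, ← Real.exp_nat_mul]
      push_cast
      ring_nf
    have hrpow : ((n : ℝ) + 2) ^ (3 / 2 : ℝ) = (n + 2) * √(n + 2) := by
      rw [Real.sqrt_eq_rpow, ← Real.rpow_one_add' hn.le (by norm_num)]
      norm_num
    have h := neg_sqrt_five_mul_re_legendreGen_le_of_norm_eq (by positivity) hpow
    rw [show ((n + 1 : ℕ) : ℝ) + 1 = n + 2 by push_cast; ring]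
    refine (div_le_div_of_nonneg_right h hn.le).trans_eq ?_
    rw [hrpow, Real.sqrt_mul hn.le]
    field_simp
  have hle := hasSum_le hterm hlog hbound
  simp only [Finset.sum_range_one, zero_add, pow_one, Nat.cast_zero, div_one] at hle
  linear_combination hle

theorem eventually_re_rrLog_le :
    ∀ᶠ σ : ℝ in 𝓝[>] 0, ∀ φ ∈ Set.Icc 0 Real.pi, 100 * σ ≤ |φ - 4 * Real.pi / 5| →
      (rrLog (exp (-σ + φ * I))).re ≤ (4 * Real.pi ^ 2 / 125 - 1 / 100) / σ := by
  obtain ⟨Z, hZ⟩ := exists_sqrt_five_mul_re_rrLog_le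
  have hsmall : ∀ᶠ σ : ℝ in 𝓝[>] 0, 10 * Z * √σ + 7 * σ < 1 / 1000 := by
    have hcont : Continuous fun σ : ℝ ↦ 10 * Z * √σ + 7 * σ := by fun_prop
    exact ((hcont.tendsto' 0 0 (by simp)).mono_left nhdsWithin_le_nhds).eventually_lt_const
      (by norm_num)
  have hnum : Real.pi ^ 2 / 6 - 1 + Real.pi / 100 + 1 / 1000 ≤
      √5 * (4 * Real.pi ^ 2 / 125 - 1 / 100) := by
    have h5 : 2.236 ≤ √(5 : ℝ) := Real.le_sqrt_of_sq_le (by norm_num)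
    have hlo : 9.869 ≤ Real.pi ^ 2 := by nlinarith [Real.pi_gt_d4]
    have hhi : Real.pi ^ 2 ≤ 9.8697 := by nlinarith [Real.pi_lt_d4, Real.pi_pos]
    calc Real.pi ^ 2 / 6 - 1 + Real.pi / 100 + 1 / 1000
        ≤ 2.236 * (4 * Real.pi ^ 2 / 125 - 1 / 100) := by linarith [Real.pi_lt_d4]
      _ ≤ √5 * (4 * Real.pi ^ 2 / 125 - 1 / 100) := by gcongr; linarith
  filter_upwards [hsmall, Ioc_mem_nhdsGT one_pos] with σ hsmall ⟨hσ₀, hσ₁⟩ φ hφ hfar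
  have hlog := hZ hσ₀ (norm_exp_neg_add_mul_I σ φ)
  have hfirst := neg_sqrt_five_mul_re_legendreGen_exp_le hσ₀ hσ₁ hφ hfar
  have hsqrt : 10 * Z / √σ * σ = 10 * Z * √σ := by
    rw [div_mul_eq_mul_div, mul_div_assoc, Real.div_sqrt]
  rw [le_div_iff₀ hσ₀]
  refine le_of_mul_le_mul_left ?_ (Real.sqrt_pos.mpr (by norm_num : (0 : ℝ) < 5))
  calc √5 * ((rrLog (exp (-σ + φ * I))).re * σ)
      ≤ ((Real.pi / (100 * σ) + 7) + (Real.pi ^ 2 / 6 - 1) / σ + 10 * Z / √σ) * σ := by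
        rw [← mul_assoc]
        gcongr
        linarith
    _ = Real.pi ^ 2 / 6 - 1 + Real.pi / 100 + (10 * Z * √σ + 7 * σ) := by
        rw [add_mul, hsqrt]
        field_simp
        ring
    _ ≤ √5 * (4 * Real.pi ^ 2 / 125 - 1 / 100) := by linarith

end MinorArc

section CircleIntegral

/-- The integrand `F(q) q^(-ν)` of Cauchy's coefficient formula at `q = exp (-σ + iφ)`, with
`log q` written explicitly so that `ν` may be real. -/
noncomputable def coeffIntegrand (F : ℂ → ℂ) (ν σ φ : ℝ) : ℂ :=
  F (exp (-σ + φ * I)) * exp (ν * (σ - φ * I))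

variable {C : ℕ → ℂ} {F : ℂ → ℂ} {σ : ℝ}

lemma norm_exp_neg_add_mul_I_lt_one (hσ : 0 < σ) (φ : ℝ) : ‖exp (-σ + φ * I)‖ < 1 := by
  rw [norm_exp_neg_add_mul_I, Real.exp_lt_one_iff]
  linarith

lemma summable_norm_mul_exp_neg_pow (hF : ∀ q, ‖q‖ < 1 → HasSum (fun n ↦ C n * q ^ n) (F q))
    (hσ : 0 < σ) : Summable fun n ↦ ‖C n‖ * Real.exp (-σ) ^ n := by
  have h := (hF _ (norm_exp_neg_add_mul_I_lt_one hσ 0)).summable.norm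
  simpa only [norm_mul, norm_pow, norm_exp_neg_add_mul_I] using h

lemma continuous_comp_exp_neg_add_mul_I
    (hF : ∀ q, ‖q‖ < 1 → HasSum (fun n ↦ C n * q ^ n) (F q)) (hσ : 0 < σ) :
    Continuous fun φ : ℝ ↦ F (exp (-σ + φ * I)) := by
  have hsum (φ : ℝ) := (hF _ (norm_exp_neg_add_mul_I_lt_one hσ φ)).tsum_eq
  simp_rw [← hsum]
  refine continuous_tsum (fun n ↦ by fun_prop) (summable_norm_mul_exp_neg_pow hF hσ) fun n φ ↦ ?_
  rw [norm_mul, norm_pow, norm_exp_neg_add_mul_I]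

lemma continuous_coeffIntegrand (hF : ∀ q, ‖q‖ < 1 → HasSum (fun n ↦ C n * q ^ n) (F q))
    (hσ : 0 < σ) (ν : ℝ) : Continuous (coeffIntegrand F ν σ) :=
  (continuous_comp_exp_neg_add_mul_I hF hσ).mul (by fun_prop)

lemma integral_exp_int_mul_I {m : ℤ} (hm : m ≠ 0) :
    ∫ φ in -Real.pi..Real.pi, exp (m * I * φ) = 0 := by
  have hperiod : exp (m * I * Real.pi) = exp (m * I * (-Real.pi : ℝ)) := by
    rw [exp_eq_exp_iff_exists_int]
    exact ⟨m, by push_cast; ring⟩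
  rw [integral_exp_mul_complex (mul_ne_zero (Int.cast_ne_zero.mpr hm) I_ne_zero), hperiod,
    sub_self, zero_div]

lemma integral_coeffIntegrand (hF : ∀ q, ‖q‖ < 1 → HasSum (fun n ↦ C n * q ^ n) (F q))
    (hσ : 0 < σ) (n : ℕ) :
    ∫ φ in -Real.pi..Real.pi, coeffIntegrand F n σ φ = 2 * Real.pi * C n := by
  have hterm (k : ℕ) (φ : ℝ) : C k * exp (-σ + φ * I) ^ k * exp (n * (σ - φ * I)) =
      C k * exp (n * σ - k * σ) * exp ((k - n : ℤ) * I * φ) := by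
    rw [← exp_nat_mul, mul_assoc, mul_assoc, ← exp_add, ← exp_add]
    push_cast
    ring_nf
  have hterms : HasSum (fun k : ℕ ↦ ∫ φ in -Real.pi..Real.pi,
      C k * exp (-σ + φ * I) ^ k * exp (n * (σ - φ * I)))
      (∫ φ in -Real.pi..Real.pi, coeffIntegrand F n σ φ) := by
    refine intervalIntegral.hasSum_integral_of_dominated_convergence
      (fun k _ ↦ ‖C k‖ * Real.exp (-σ) ^ k * Real.exp (n * σ))
      (fun k ↦ (by fun_prop : Continuous _).aestronglyMeasurable)
      (fun k ↦ .of_forall fun φ _ ↦ ?_)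
      (.of_forall fun _ _ ↦ (summable_norm_mul_exp_neg_pow hF hσ).mul_right _)
      intervalIntegrable_const
      (.of_forall fun φ _ ↦ (hF _ (norm_exp_neg_add_mul_I_lt_one hσ φ)).mul_right _)
    rw [norm_mul, norm_mul, norm_pow, norm_exp_neg_add_mul_I, norm_exp]
    simp
  refine hterms.unique ?_
  simp only [hterm, intervalIntegral.integral_const_mul]
  convert hasSum_single n fun k hk ↦ ?_ using 1
  · simp
    ring
  · rw [integral_exp_int_mul_I (by lia), mul_zero]

lemma coeffIntegrand_neg (hconj : ∀ q, F (starRingEnd ℂ q) = starRingEnd ℂ (F q)) (ν σ φ : ℝ) :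
    coeffIntegrand F ν σ (-φ) = starRingEnd ℂ (coeffIntegrand F ν σ φ) := by
  simp [coeffIntegrand, ← hconj, ← exp_conj]

lemma coeff_eq_re_integral (hF : ∀ q, ‖q‖ < 1 → HasSum (fun n ↦ C n * q ^ n) (F q))
    (hconj : ∀ q, F (starRingEnd ℂ q) = starRingEnd ℂ (F q)) (hσ : 0 < σ) (n : ℕ) :
    C n = (((∫ φ in 0..Real.pi, coeffIntegrand F n σ φ).re / Real.pi : ℝ) : ℂ) := by
  have hint (a b : ℝ) := (continuous_coeffIntegrand hF hσ n).intervalIntegrable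
    (μ := MeasureTheory.volume) a b
  have hneg : ∫ φ in -Real.pi..0, coeffIntegrand F n σ φ =
      starRingEnd ℂ (∫ φ in 0..Real.pi, coeffIntegrand F n σ φ) := by
    rw [← intervalIntegral.intervalIntegral_conj, ← neg_zero,
      ← intervalIntegral.integral_comp_neg, neg_zero]
    simp only [coeffIntegrand_neg hconj]
  have h := integral_coeffIntegrand hF hσ n
  rw [← intervalIntegral.integral_add_adjacent_intervals (hint _ 0) (hint 0 _), hneg, add_comm,
    add_conj] at h
  have hpi : (Real.pi : ℂ) ≠ 0 := ofReal_ne_zero.mpr Real.pi_ne_zero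
  push_cast at h ⊢
  rw [eq_div_iff hpi]
  linear_combination -h / 2

end CircleIntegral

section SaddlePoint

open MeasureTheory

lemma one_sub_ofReal_mul_I_ne_zero (u : ℝ) : 1 - u * I ≠ 0 := fun h ↦ by
  simpa using congrArg re h

lemma norm_exp_neg_sq_div (u v : ℝ) :
    ‖exp (-v ^ 2 / (1 - u * I))‖ = Real.exp (-v ^ 2 / (1 + u ^ 2)) := by
  rw [norm_exp, div_re]
  simp [normSq_apply, ← ofReal_pow]
  field_simp

lemma norm_exp_neg_sq_div_le {K T v : ℝ} (hT : 0 < T) (hv : |v| ≤ K * T) :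
    ‖exp (-v ^ 2 / (1 - (v / T : ℝ) * I))‖ ≤ Real.exp (-(1 / (1 + K ^ 2)) * v ^ 2) := by
  have hu : (v / T) ^ 2 ≤ K ^ 2 := by
    rw [← sq_abs, abs_div, abs_of_pos hT]
    gcongr
    rwa [div_le_iff₀ hT]
  rw [norm_exp_neg_sq_div, neg_div, neg_mul, one_div_mul_eq_div]
  gcongr

lemma continuous_exp_neg_sq_div (T : ℝ) :
    Continuous fun v : ℝ ↦ exp (-v ^ 2 / (1 - (v / T : ℝ) * I)) := by
  have (v : ℝ) := one_sub_ofReal_mul_I_ne_zero (v / T)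
  fun_prop (disch := assumption)

lemma tendsto_exp_neg_sq_div {ι : Type*} {l : Filter ι} {T : ι → ℝ} (hT : Tendsto T l atTop)
    (v : ℝ) : Tendsto (fun i ↦ exp (-v ^ 2 / (1 - (v / T i : ℝ) * I))) l
      (𝓝 (Real.exp (-1 * v ^ 2) : ℝ)) := by
  have hcont : ContinuousAt (fun u : ℝ ↦ exp (-v ^ 2 / (1 - u * I))) 0 := by
    have := one_sub_ofReal_mul_I_ne_zero 0
    fun_prop (disch := assumption)
  have hzero : exp (-v ^ 2 / (1 - (0 : ℝ) * I)) = (Real.exp (-1 * v ^ 2) : ℝ) := by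
    push_cast
    simp
  exact (hzero ▸ hcont.tendsto).comp (hT.const_div_atTop v)

/-- Laplace's method for the phase `-v² / (1 - iv/T)`, which on the window `|v| ≤ K T` has real
part at most `-v² / (1 + K²)`. -/
lemma tendsto_integral_mul_exp_neg_sq_div {ι : Type*} {l : Filter ι} [l.IsCountablyGenerated]
    {T : ι → ℝ} {g : ι → ℝ → ℂ} {K M : ℝ} {L : ℂ} (hK : 0 < K) (hT : Tendsto T l atTop)
    (hg : ∀ᶠ i in l, Continuous (g i)) (hbound : ∀ᶠ i in l, ∀ v, |v| ≤ K * T i → ‖g i v‖ ≤ M)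
    (hlim : ∀ v, Tendsto (fun i ↦ g i v) l (𝓝 L)) :
    Tendsto (fun i ↦ ∫ v in -(K * T i)..K * T i, g i v * exp (-v ^ 2 / (1 - (v / T i : ℝ) * I))) l
      (𝓝 (L * √Real.pi)) := by
  have hgauss : ∫ v : ℝ, L * (Real.exp (-1 * v ^ 2) : ℝ) = L * √Real.pi := by
    rw [integral_const_mul, integral_complex_ofReal, integral_gaussian, div_one]
  rw [← hgauss]
  have hdom : Tendsto (fun i ↦ ∫ v, (Set.Ioc (-(K * T i)) (K * T i)).indicator
      (fun v ↦ g i v * exp (-v ^ 2 / (1 - (v / T i : ℝ) * I))) v) l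
      (𝓝 (∫ v : ℝ, L * (Real.exp (-1 * v ^ 2) : ℝ))) := by
    refine tendsto_integral_filter_of_dominated_convergence
      (fun v ↦ |M| * Real.exp (-(1 / (1 + K ^ 2)) * v ^ 2)) ?_ ?_
      ((integrable_exp_neg_mul_sq (by positivity)).const_mul _) (.of_forall fun v ↦ ?_)
    · filter_upwards [hg] with i hi
      exact ((hi.mul (continuous_exp_neg_sq_div (T i))).measurable.indicator
        measurableSet_Ioc).aestronglyMeasurable
    · filter_upwards [hbound, hT.eventually_gt_atTop 0] with i hi hTi
      refine .of_forall fun v ↦ ?_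
      by_cases hv : v ∈ Set.Ioc (-(K * T i)) (K * T i)
      · have hv' : |v| ≤ K * T i := abs_le.mpr ⟨hv.1.le, hv.2⟩
        rw [Set.indicator_of_mem hv, norm_mul]
        gcongr
        exacts [(hi v hv').trans (le_abs_self M), norm_exp_neg_sq_div_le hTi hv']
      · rw [Set.indicator_of_notMem hv, norm_zero]
        positivity
    · have hmem : ∀ᶠ i in l, v ∈ Set.Ioc (-(K * T i)) (K * T i) := by
        filter_upwards [(hT.const_mul_atTop hK).eventually_gt_atTop |v|] with i hi
        exact ⟨(abs_lt.mp hi).1, (abs_lt.mp hi).2.le⟩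
      refine ((hlim v).mul (tendsto_exp_neg_sq_div hT v)).congr' ?_
      filter_upwards [hmem] with i hi
      rw [Set.indicator_of_mem hi]
  refine hdom.congr' ?_
  filter_upwards [hT.eventually_ge_atTop 0] with i hi
  rw [integral_indicator measurableSet_Ioc,
    intervalIntegral.integral_of_le (by linarith [mul_nonneg hK.le hi])]

variable {C : ℕ → ℂ} {F : ℂ → ℂ} {A θ K η : ℝ} {L : ℂ}

/-- The reciprocal of the expected size of `∫ coeffIntegrand F (A / σ²) σ` near `φ = θ`: the value
`exp (2A/σ - iAθ/σ²)` of the main term at the saddle point, times the width `σ / √(A / σ)` of the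
peak. -/
noncomputable def saddleWeight (A θ σ : ℝ) : ℂ :=
  (√(A / σ) / σ : ℝ) * exp (-(2 * A / σ : ℝ) + (A / σ ^ 2 : ℝ) * θ * I)

lemma norm_saddleWeight (A θ : ℝ) {σ : ℝ} (hσ : 0 < σ) :
    ‖saddleWeight A θ σ‖ = √(A / σ) / σ * Real.exp (-(2 * A / σ)) := by
  rw [saddleWeight, norm_mul, norm_exp, norm_real, Real.norm_of_nonneg (by positivity),
    ← ofReal_mul, add_re, neg_re, ofReal_re, re_ofReal_mul, I_re, mul_zero, add_zero]

/-- The exponents combine through `(1 - iu) - 2 + 1 / (1 - iu) = -u² / (1 - iu)` with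
`u = v / √(A / σ)`. -/
lemma coeffIntegrand_mul_exp (F : ℂ → ℂ) (hA : 0 < A) (θ : ℝ) {σ : ℝ} (hσ : 0 < σ) (v : ℝ) :
    coeffIntegrand F (A / σ ^ 2) σ (θ + σ / √(A / σ) * v) *
        exp (-(2 * A / σ : ℝ) + (A / σ ^ 2 : ℝ) * θ * I) =
      F (exp (θ * I - σ * (1 - (v / √(A / σ) : ℝ) * I))) *
          exp (-(A / (σ * (1 - (v / √(A / σ) : ℝ) * I)))) *
        exp (-v ^ 2 / (1 - (v / √(A / σ) : ℝ) * I)) := by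
  have hT : 0 < √(A / σ) := Real.sqrt_pos.mpr (by positivity)
  obtain ⟨u, rfl⟩ : ∃ u, v = u * √(A / σ) := ⟨v / √(A / σ), (div_mul_cancel₀ _ hT.ne').symm⟩
  have hv : ((u * √(A / σ) : ℝ) : ℂ) ^ 2 = u ^ 2 * (A / σ) := by
    rw [← ofReal_pow, mul_pow, Real.sq_sqrt (by positivity)]
    push_cast
    rfl
  have hu : σ / √(A / σ) * (u * √(A / σ)) = σ * u := by field_simp
  have hpoint : -σ + (θ + σ * u : ℝ) * I = θ * I - σ * (1 - u * I) := by push_cast; ring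
  have hσ' : (σ : ℂ) ≠ 0 := ofReal_ne_zero.mpr hσ.ne'
  have hne := one_sub_ofReal_mul_I_ne_zero u
  rw [coeffIntegrand, mul_div_cancel_right₀ u hT.ne', hv, hu, hpoint, mul_assoc (F _),
    mul_assoc (F _), ← exp_add, ← exp_add]
  congr 2
  push_cast
  field_simp
  linear_combination A * σ * (u : ℂ) ^ 2 * I_sq

lemma ofReal_mul_one_sub_mem_sector {σ u : ℝ} (hσ : 0 < σ) (hu : |u| ≤ K) :
    σ * (1 - u * I) ∈ sector (K + 1) := by
  refine ofReal_mul_mem_sector hσ ⟨by simp, ?_⟩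
  calc ‖1 - u * I‖ ≤ 1 + |u| := (norm_sub_le _ _).trans_eq (by simp)
    _ ≤ (K + 1) * (1 - u * I).re := by simp [add_comm, hu]

lemma eventually_forall_abs_le_of_nhdsWithin_sector (hK : 0 < K) {P : ℂ → Prop}
    (hP : ∀ᶠ s in 𝓝[sector (K + 1)] 0, P s) :
    ∀ᶠ σ : ℝ in 𝓝[>] 0, ∀ u : ℝ, |u| ≤ K → P (σ * (1 - u * I)) := by
  obtain ⟨δ, hδ, hP⟩ := Metric.eventually_nhds_iff.mp (eventually_nhdsWithin_iff.mp hP)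
  filter_upwards [Ioo_mem_nhdsGT (div_pos hδ (by linarith : 0 < K + 1))] with σ ⟨hσ, hσδ⟩ u hu
  have hmem := ofReal_mul_one_sub_mem_sector hσ hu
  refine hP ?_ hmem
  rw [lt_div_iff₀' (by linarith)] at hσδ
  simpa using hmem.2.trans_lt (by simpa using hσδ)

lemma tendsto_sqrt_div_atTop (hA : 0 < A) :
    Tendsto (fun σ ↦ √(A / σ)) (𝓝[>] 0) atTop :=
  Real.tendsto_sqrt_atTop.comp (tendsto_inv_nhdsGT_zero.const_mul_atTop hA)

lemma continuous_major (hF : ∀ q, ‖q‖ < 1 → HasSum (fun n ↦ C n * q ^ n) (F q)) (A θ T : ℝ)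
    {σ : ℝ} (hσ : 0 < σ) :
    Continuous fun v : ℝ ↦ F (exp (θ * I - σ * (1 - (v / T : ℝ) * I))) *
      exp (-(A / (σ * (1 - (v / T : ℝ) * I)))) := by
  have hpoint (v : ℝ) : θ * I - σ * (1 - (v / T : ℝ) * I) = -σ + (θ + σ * (v / T) : ℝ) * I := by
    push_cast
    ring
  have hne (v : ℝ) : σ * (1 - (v / T : ℝ) * I) ≠ 0 :=
    mul_ne_zero (ofReal_ne_zero.mpr hσ.ne') (one_sub_ofReal_mul_I_ne_zero _)
  simp_rw [hpoint]
  exact ((continuous_comp_exp_neg_add_mul_I hF hσ).comp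
    (by fun_prop : Continuous fun v : ℝ ↦ θ + σ * (v / T))).mul (by fun_prop (disch := assumption))

lemma integral_coeffIntegrand_center (F : ℂ → ℂ) (hA : 0 < A) (θ K : ℝ) {σ : ℝ} (hσ : 0 < σ) :
    saddleWeight A θ σ * ∫ φ in θ - K * σ..θ + K * σ, coeffIntegrand F (A / σ ^ 2) σ φ =
      ∫ v in -(K * √(A / σ))..K * √(A / σ),
        F (exp (θ * I - σ * (1 - (v / √(A / σ) : ℝ) * I))) *
          exp (-(A / (σ * (1 - (v / √(A / σ) : ℝ) * I)))) *
            exp (-v ^ 2 / (1 - (v / √(A / σ) : ℝ) * I)) := by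
  have hT : 0 < √(A / σ) := Real.sqrt_pos.mpr (by positivity)
  have hlo : θ - K * σ = θ + σ / √(A / σ) * -(K * √(A / σ)) := by field_simp; ring
  have hhi : θ + K * σ = θ + σ / √(A / σ) * (K * √(A / σ)) := by field_simp
  have hjac : ((√(A / σ) / σ : ℝ) : ℂ) * (σ / √(A / σ) : ℝ) = 1 := by
    rw [← ofReal_mul, div_mul_div_cancel₀ hσ.ne', div_self hT.ne', ofReal_one]
  simp only [← coeffIntegrand_mul_exp F hA θ hσ, intervalIntegral.integral_mul_const]
  rw [saddleWeight, hlo, hhi, ← intervalIntegral.smul_integral_comp_add_mul, real_smul]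
  linear_combination exp _ * (∫ v in _.._, _) * hjac

lemma tendsto_integral_coeffIntegrand_center
    (hF : ∀ q, ‖q‖ < 1 → HasSum (fun n ↦ C n * q ^ n) (F q)) (hA : 0 < A) (hK : 0 < K)
    (hmajor : Tendsto (fun s ↦ F (exp (θ * I - s)) * exp (-(A / s))) (𝓝[sector (K + 1)] 0) (𝓝 L)) :
    Tendsto (fun σ : ℝ ↦ saddleWeight A θ σ *
      ∫ φ in θ - K * σ..θ + K * σ, coeffIntegrand F (A / σ ^ 2) σ φ) (𝓝[>] 0)
      (𝓝 (L * √Real.pi)) := by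
  have hT := tendsto_sqrt_div_atTop hA
  have hcenter := tendsto_integral_mul_exp_neg_sq_div (M := ‖L‖ + 1) hK hT
    (g := fun σ v ↦ F (exp (θ * I - σ * (1 - (v / √(A / σ) : ℝ) * I))) *
      exp (-(A / (σ * (1 - (v / √(A / σ) : ℝ) * I))))) (L := L) ?_ ?_ fun v ↦ hmajor.comp
      fun P hP ↦ mem_map.mpr ?_
  · refine hcenter.congr' ?_
    filter_upwards [self_mem_nhdsWithin] with σ hσ
    exact (integral_coeffIntegrand_center F hA θ K hσ).symm
  · filter_upwards [self_mem_nhdsWithin] with σ hσ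
    exact continuous_major hF A θ _ hσ
  · filter_upwards [eventually_forall_abs_le_of_nhdsWithin_sector hK
      (hmajor.norm.eventually_le_const (lt_add_one ‖L‖)), hT.eventually_gt_atTop 0]
      with σ hσ hT v hv
    exact hσ _ (by rwa [abs_div, abs_of_pos hT, div_le_iff₀ hT])
  · have hsmall : ∀ᶠ σ in 𝓝[>] 0, |v / √(A / σ)| ≤ K :=
      (hT.const_div_atTop v).abs.eventually_le_const (by rwa [abs_zero])
    filter_upwards [eventually_forall_abs_le_of_nhdsWithin_sector hK hP, hsmall] with σ hσ hv
    exact hσ _ hv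

lemma norm_integral_sub_integral_le {f : ℝ → ℂ} (hf : Continuous f) {a a' b' b B : ℝ} (ha : a ≤ a')
    (hab : a' ≤ b') (hb : b' ≤ b) (hB : ∀ x ∈ Set.Icc a b, x ∉ Set.Ioo a' b' → ‖f x‖ ≤ B) :
    ‖(∫ x in a..b, f x) - ∫ x in a'..b', f x‖ ≤ B * (b - a) := by
  have hint (x y : ℝ) := hf.intervalIntegrable (μ := volume) x y
  have hsplit : (∫ x in a..b, f x) - ∫ x in a'..b', f x =
      (∫ x in a..a', f x) + ∫ x in b'..b, f x := by
    rw [← intervalIntegral.integral_add_adjacent_intervals (hint a a') (hint a' b),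
      ← intervalIntegral.integral_add_adjacent_intervals (hint a' b') (hint b' b)]
    ring
  have hleft : ‖∫ x in a..a', f x‖ ≤ B * |a' - a| := by
    refine intervalIntegral.norm_integral_le_of_norm_le_const fun x hx ↦ ?_
    rw [Set.uIoc_of_le ha] at hx
    exact hB x ⟨hx.1.le, by linarith [hx.2]⟩ fun h ↦ hx.2.not_gt h.1
  have hright : ‖∫ x in b'..b, f x‖ ≤ B * |b - b'| := by
    refine intervalIntegral.norm_integral_le_of_norm_le_const fun x hx ↦ ?_
    rw [Set.uIoc_of_le hb] at hx
    exact hB x ⟨by linarith [hx.1], hx.2⟩ fun h ↦ hx.1.not_gt h.2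
  have hB₀ : 0 ≤ B := (norm_nonneg _).trans (hB a ⟨le_rfl, by linarith⟩ fun h ↦ h.1.not_ge ha)
  rw [abs_of_nonneg (by linarith)] at hleft hright
  rw [hsplit]
  calc _ ≤ B * (a' - a) + B * (b - b') := norm_add_le_of_le hleft hright
    _ ≤ B * (b - a) := by nlinarith

lemma tendsto_sqrt_div_mul_exp_neg_div (A : ℝ) (hη : 0 < η) :
    Tendsto (fun σ ↦ √(A / σ) / σ * Real.exp (-(η / σ))) (𝓝[>] 0) (𝓝 0) := by
  have h := ((tendsto_rpow_mul_exp_neg_mul_atTop_nhds_zero (3 / 2) η hη).comp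
    tendsto_inv_nhdsGT_zero).const_mul √A
  rw [mul_zero] at h
  refine h.congr' ?_
  filter_upwards [self_mem_nhdsWithin] with σ (hσ : 0 < σ)
  have hpow : σ⁻¹ ^ (3 / 2 : ℝ) = √σ⁻¹ * σ⁻¹ := by
    rw [Real.sqrt_eq_rpow, ← Real.rpow_add_one (inv_ne_zero hσ.ne')]
    norm_num
  rw [Function.comp, hpow, div_eq_mul_inv A, Real.sqrt_mul' _ (inv_nonneg.mpr hσ.le)]
  ring_nf

lemma norm_coeffIntegrand_le {σ φ : ℝ} (hσ : 0 < σ)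
    (h : ‖F (exp (-σ + φ * I))‖ ≤ Real.exp ((A - η) / σ)) :
    ‖coeffIntegrand F (A / σ ^ 2) σ φ‖ ≤ Real.exp ((2 * A - η) / σ) := by
  have hre : ((A / σ ^ 2 : ℝ) * (σ - φ * I) : ℂ).re = A / σ := by
    rw [re_ofReal_mul]
    simp
    field_simp
  rw [coeffIntegrand, norm_mul, norm_exp, hre]
  calc _ ≤ Real.exp ((A - η) / σ) * Real.exp (A / σ) := by gcongr
    _ = Real.exp ((2 * A - η) / σ) := by rw [← Real.exp_add]; ring_nf

/-- Off the window `|φ - θ| < K σ` the integrand is smaller than its saddle value `exp (2A/σ)` by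
the factor `exp (-η/σ)`. -/
lemma tendsto_integral_coeffIntegrand_sub_center
    (hF : ∀ q, ‖q‖ < 1 → HasSum (fun n ↦ C n * q ^ n) (F q)) (hK : 0 < K)
    (hθ : θ ∈ Set.Ioo 0 Real.pi) (hη : 0 < η)
    (hminor : ∀ᶠ σ : ℝ in 𝓝[>] 0, ∀ φ ∈ Set.Icc 0 Real.pi, K * σ ≤ |φ - θ| →
      ‖F (exp (-σ + φ * I))‖ ≤ Real.exp ((A - η) / σ)) :
    Tendsto (fun σ : ℝ ↦ saddleWeight A θ σ *
      ((∫ φ in 0..Real.pi, coeffIntegrand F (A / σ ^ 2) σ φ) -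
        ∫ φ in θ - K * σ..θ + K * σ, coeffIntegrand F (A / σ ^ 2) σ φ)) (𝓝[>] 0) (𝓝 0) := by
  have hwindow {δ : ℝ} (hδ : 0 < δ) : ∀ᶠ σ in 𝓝[>] 0, K * σ < δ :=
    (((continuous_const_mul K).tendsto' 0 0 (mul_zero K)).mono_left
      nhdsWithin_le_nhds).eventually_lt_const hδ
  have htail := (tendsto_sqrt_div_mul_exp_neg_div A hη).mul_const Real.pi
  rw [zero_mul] at htail
  refine squeeze_zero_norm' ?_ htail
  filter_upwards [hminor, hwindow hθ.1, hwindow (sub_pos.mpr hθ.2), self_mem_nhdsWithin]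
    with σ hminor hlo hhi (hσ : 0 < σ)
  have hKσ := mul_pos hK hσ
  have hbound : ∀ φ ∈ Set.Icc 0 Real.pi, φ ∉ Set.Ioo (θ - K * σ) (θ + K * σ) →
      ‖coeffIntegrand F (A / σ ^ 2) σ φ‖ ≤ Real.exp ((2 * A - η) / σ) := fun φ hφ hout ↦ by
    refine norm_coeffIntegrand_le hσ (hminor φ hφ ?_)
    contrapose! hout
    rw [abs_lt] at hout
    exact ⟨by linarith [hout.1], by linarith [hout.2]⟩
  rw [norm_mul, norm_saddleWeight A θ hσ]
  calc _ ≤ √(A / σ) / σ * Real.exp (-(2 * A / σ)) *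
        (Real.exp ((2 * A - η) / σ) * (Real.pi - 0)) := by
        gcongr
        exact norm_integral_sub_integral_le (continuous_coeffIntegrand hF hσ _) (by linarith)
          (by linarith) (by linarith) hbound
    _ = √(A / σ) / σ * (Real.exp (-(2 * A / σ)) * Real.exp ((2 * A - η) / σ)) * Real.pi := by ring
    _ = √(A / σ) / σ * Real.exp (-(η / σ)) * Real.pi := by
        rw [← Real.exp_add]
        ring_nf

lemma tendsto_integral_coeffIntegrand
    (hF : ∀ q, ‖q‖ < 1 → HasSum (fun n ↦ C n * q ^ n) (F q)) (hA : 0 < A) (hK : 0 < K)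
    (hθ : θ ∈ Set.Ioo 0 Real.pi) (hη : 0 < η)
    (hmajor : Tendsto (fun s ↦ F (exp (θ * I - s)) * exp (-(A / s))) (𝓝[sector (K + 1)] 0) (𝓝 L))
    (hminor : ∀ᶠ σ : ℝ in 𝓝[>] 0, ∀ φ ∈ Set.Icc 0 Real.pi, K * σ ≤ |φ - θ| →
      ‖F (exp (-σ + φ * I))‖ ≤ Real.exp ((A - η) / σ)) :
    Tendsto (fun σ : ℝ ↦ saddleWeight A θ σ *
      ∫ φ in 0..Real.pi, coeffIntegrand F (A / σ ^ 2) σ φ) (𝓝[>] 0) (𝓝 (L * √Real.pi)) := by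
  have h := (tendsto_integral_coeffIntegrand_sub_center hF hK hθ hη hminor).add
    (tendsto_integral_coeffIntegrand_center hF hA hK hmajor)
  simpa only [mul_sub, sub_add_cancel, zero_add] using h

/-- The growth rate of the coefficients of a power series whose dominant singularity is of the form
`exp (A / s)`, `q = ζ exp (-s)`. -/
noncomputable def saddleScale (A x : ℝ) : ℝ :=
  A ^ (1 / 4 : ℝ) * x ^ (-(3 : ℝ) / 4) * Real.exp (2 * √(A * x)) / √Real.pi

lemma saddleScale_pos (hA : 0 < A) {x : ℝ} (hx : 0 < x) : 0 < saddleScale A x := by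
  rw [saddleScale]
  positivity

lemma saddleWeight_sqrt_div (hA : 0 < A) (θ : ℝ) {x : ℝ} (hx : 0 < x) :
    saddleWeight A θ √(A / x) = exp (x * θ * I) / (√Real.pi * saddleScale A x : ℝ) := by
  have hroot {y : ℝ} (hy : 0 < y) : ∃ z > 0, y = z ^ 4 :=
    ⟨y ^ (1 / 4 : ℝ), by positivity, by rw [← Real.rpow_natCast, ← Real.rpow_mul hy.le]; simp⟩
  obtain ⟨a, ha, rfl⟩ := hroot hA
  obtain ⟨b, hb, rfl⟩ := hroot hx
  have hsqrt (y : ℝ) : √(y ^ 4) = y ^ 2 := by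
    rw [show y ^ 4 = (y ^ 2) ^ 2 by ring, Real.sqrt_sq (by positivity)]
  have hrpow₁ : (a ^ 4) ^ (1 / 4 : ℝ) = a := by
    rw [← Real.rpow_natCast, ← Real.rpow_mul ha.le]; norm_num
  have hrpow₂ : (b ^ 4) ^ (-(3 : ℝ) / 4) = (b ^ 3)⁻¹ := by
    rw [← Real.rpow_natCast b 4, ← Real.rpow_mul hb.le, ← Real.rpow_natCast b 3,
      ← Real.rpow_neg hb.le]
    norm_num
  have hσ : √(a ^ 4 / b ^ 4) = (a / b) ^ 2 := by rw [← div_pow, hsqrt]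
  have hT : √(a ^ 4 / (a / b) ^ 2) = a * b := by
    rw [show a ^ 4 / (a / b) ^ 2 = (a * b) ^ 2 by field_simp, Real.sqrt_sq (by positivity)]
  have hν : a ^ 4 / ((a / b) ^ 2) ^ 2 = b ^ 4 := by field_simp
  have hexp : 2 * a ^ 4 / (a / b) ^ 2 = 2 * √(a ^ 4 * b ^ 4) := by
    rw [← mul_pow, hsqrt]
    field_simp
  rw [saddleWeight, saddleScale, hσ, hT, hν, hexp, hrpow₁, hrpow₂, exp_add, ← ofReal_neg,
    ← ofReal_exp, Real.exp_neg]
  have hpi : (√Real.pi : ℂ) ≠ 0 := ofReal_ne_zero.mpr (Real.sqrt_pos.mpr Real.pi_pos).ne'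
  push_cast
  field_simp

lemma im_coeff_eq_zero (hF : ∀ q, ‖q‖ < 1 → HasSum (fun n ↦ C n * q ^ n) (F q))
    (hconj : ∀ q, F (starRingEnd ℂ q) = starRingEnd ℂ (F q)) (n : ℕ) : (C n).im = 0 := by
  rw [coeff_eq_re_integral hF hconj one_pos, ofReal_im]

lemma abs_re_div_sub_re_le (L X : ℂ) (α S : ℝ) :
    |X.re / Real.pi / S - (L * exp (-(α * I))).re| ≤
      ‖exp (α * I) / (√Real.pi * S : ℝ) * X - L * √Real.pi‖ / √Real.pi := by
  have hpi : 0 < √Real.pi := Real.sqrt_pos.mpr Real.pi_pos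
  have hpi' : (√Real.pi : ℂ) ≠ 0 := ofReal_ne_zero.mpr hpi.ne'
  have hrotate : X / (Real.pi * S : ℝ) - L * exp (-(α * I)) =
      exp (-(α * I)) * ((exp (α * I) / (√Real.pi * S : ℝ) * X - L * √Real.pi) / √Real.pi) := by
    have hsq : (Real.pi : ℂ) = √Real.pi * √Real.pi := by
      rw [← ofReal_mul, Real.mul_self_sqrt Real.pi_pos.le]
    rw [exp_neg, ofReal_mul, ofReal_mul, hsq]
    field_simp [exp_ne_zero]
  calc _ = |(X / (Real.pi * S : ℝ) - L * exp (-(α * I))).re| := by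
        rw [sub_re, div_ofReal_re, div_div]
    _ ≤ ‖X / (Real.pi * S : ℝ) - L * exp (-(α * I))‖ := abs_re_le_norm _
    _ = _ := by
        rw [hrotate, norm_mul, norm_div, norm_real, Real.norm_of_nonneg hpi.le, ← neg_mul,
          ← ofReal_neg, norm_exp_ofReal_mul_I, one_mul]

theorem tendsto_re_coeff_div_saddleScale_sub
    (hF : ∀ q, ‖q‖ < 1 → HasSum (fun n ↦ C n * q ^ n) (F q))
    (hconj : ∀ q, F (starRingEnd ℂ q) = starRingEnd ℂ (F q)) (hA : 0 < A) (hK : 0 < K)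
    (hθ : θ ∈ Set.Ioo 0 Real.pi) (hη : 0 < η)
    (hmajor : Tendsto (fun s ↦ F (exp (θ * I - s)) * exp (-(A / s))) (𝓝[sector (K + 1)] 0) (𝓝 L))
    (hminor : ∀ᶠ σ : ℝ in 𝓝[>] 0, ∀ φ ∈ Set.Icc 0 Real.pi, K * σ ≤ |φ - θ| →
      ‖F (exp (-σ + φ * I))‖ ≤ Real.exp ((A - η) / σ)) :
    Tendsto (fun n : ℕ ↦ (C n).re / saddleScale A n - (L * exp (-(n * θ * I))).re) atTop
      (𝓝 0) := by
  have hσ : Tendsto (fun n : ℕ ↦ √(A / n)) atTop (𝓝[>] 0) := by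
    refine tendsto_nhdsWithin_iff.mpr ⟨?_, ?_⟩
    · simpa using (tendsto_const_div_atTop_nhds_zero_nat A).sqrt
    · filter_upwards [eventually_gt_atTop 0] with n hn
      exact Real.sqrt_pos.mpr (by positivity)
  have hlim := ((tendsto_integral_coeffIntegrand hF hA hK hθ hη hmajor hminor).comp hσ).sub_const
    (L * √Real.pi)
  have herror := hlim.norm.div_const √Real.pi
  rw [sub_self, norm_zero, zero_div] at herror
  refine squeeze_zero_norm' ?_ herror
  filter_upwards [eventually_gt_atTop 0] with n hn
  have hn' : (0 : ℝ) < n := Nat.cast_pos.mpr hn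
  have hν : A / √(A / n) ^ 2 = n := by
    rw [Real.sq_sqrt (by positivity)]
    field_simp
  have hcoeff := coeff_eq_re_integral hF hconj (Real.sqrt_pos.mpr (div_pos hA hn')) n
  rw [Function.comp, hν, hcoeff, ofReal_re, saddleWeight_sqrt_div hA θ hn']
  simpa only [Real.norm_eq_abs, ofReal_mul, ofReal_natCast] using
    abs_re_div_sub_re_le L _ (n * θ) (saddleScale A n)

end SaddlePoint

lemma tendsto_sqrt_add_sub_sqrt (a : ℝ) :
    Tendsto (fun x ↦ √(x + a) - √x) atTop (𝓝 0) := by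
  have hsum : Tendsto (fun x ↦ √(x + a) + √x) atTop atTop :=
    (Real.tendsto_sqrt_atTop.comp (tendsto_atTop_add_const_right _ a tendsto_id)).atTop_add_nonneg
      fun x ↦ Real.sqrt_nonneg x
  refine (hsum.const_div_atTop a).congr' ?_
  filter_upwards [eventually_gt_atTop 0, eventually_ge_atTop (-a)] with x hx hxa
  have hpos : 0 < √(x + a) + √x := add_pos_of_nonneg_of_pos (Real.sqrt_nonneg _) (by positivity)
  rw [div_eq_iff hpos.ne', mul_comm, ← sq_sub_sq, Real.sq_sqrt (by linarith), Real.sq_sqrt hx.le]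
  ring

lemma tendsto_saddleScale_div_saddleScale_add {A : ℝ} (hA : 0 < A) (a : ℝ) :
    Tendsto (fun x ↦ saddleScale A x / saddleScale A (x + a)) atTop (𝓝 1) := by
  have hpow : Tendsto (fun x : ℝ ↦ (1 + a / x) ^ (3 / 4 : ℝ)) atTop (𝓝 1) := by
    have h := ((tendsto_id.const_div_atTop a).const_add 1).rpow_const (p := (3 / 4 : ℝ))
      (Or.inl (by norm_num))
    rwa [add_zero, Real.one_rpow] at h
  have hexp := ((tendsto_sqrt_add_sub_sqrt a).const_mul (-(2 * √A))).rexp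
  rw [mul_zero, Real.exp_zero] at hexp
  refine (one_mul (1 : ℝ) ▸ hpow.mul hexp).congr' ?_
  filter_upwards [eventually_gt_atTop 0, eventually_gt_atTop (-a)] with x hx hxa
  have hxa : 0 < x + a := by linarith
  have hadd : 1 + a / x = (x + a) / x := by field_simp
  have hroot : -(2 * √A) * (√(x + a) - √x) = 2 * √(A * x) - 2 * √(A * (x + a)) := by
    rw [Real.sqrt_mul hA.le, Real.sqrt_mul hA.le]
    ring
  rw [saddleScale, saddleScale, hadd, hroot, Real.exp_sub, Real.div_rpow hxa.le hx.le, neg_div,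
    Real.rpow_neg hx.le, Real.rpow_neg hxa.le]
  field_simp

lemma saddleScale_four_mul_pi_sq_div (x : ℝ) :
    saddleScale (4 * Real.pi ^ 2 / 125) x = √2 / 5 ^ ((3 : ℝ) / 4) * x ^ (-(3 : ℝ) / 4) *
      Real.exp (4 * Real.pi / (5 * √5) * √x) := by
  have hA : 4 * Real.pi ^ 2 / 125 = (2 * Real.pi) ^ 2 / 5 ^ 3 := by ring
  have hsqrt : √(4 * Real.pi ^ 2 / 125 * x) = 2 * Real.pi / (5 * √5) * √x := by
    rw [hA, Real.sqrt_mul (by positivity), Real.sqrt_div (by positivity),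
      Real.sqrt_sq (by positivity), pow_succ, Real.sqrt_mul (by positivity),
      Real.sqrt_sq (by positivity)]
  have hroot : (4 * Real.pi ^ 2 / 125) ^ (1 / 4 : ℝ) = √2 * √Real.pi / 5 ^ ((3 : ℝ) / 4) := by
    rw [hA, Real.div_rpow (by positivity) (by positivity), ← Real.rpow_natCast,
      ← Real.rpow_natCast, ← Real.rpow_mul (by positivity), ← Real.rpow_mul (by positivity),
      ← Real.sqrt_mul zero_le_two, Real.sqrt_eq_rpow]
    norm_num
  rw [saddleScale, hsqrt, hroot]
  field_simp
  ring_nf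

/-- The oscillating factor in the asymptotics of the coefficients; being periodic and nonzero, it is
bounded away from zero. -/
noncomputable def rrCos (n : ℕ) : ℝ := Real.cos (4 * Real.pi / 5 * (n + 3 / 20))

lemma rrCos_mod_five (n : ℕ) : rrCos (n % 5) = rrCos n := by
  rw [rrCos, rrCos, ← Real.cos_add_nat_mul_two_pi _ (2 * (n / 5))]
  congr 1
  nth_rw 3 [← Nat.mod_add_div n 5]
  push_cast
  ring

lemma rrCos_pos {n : ℕ} (hn : n % 5 = 0 ∨ n % 5 = 2) : 0 < rrCos n := by
  have hpi := Real.pi_pos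
  rw [← rrCos_mod_five]
  rcases hn with hn | hn <;> rw [hn, rrCos]
  · apply Real.cos_pos_of_mem_Ioo
    constructor <;> push_cast <;> linarith
  · rw [← Real.cos_sub_two_pi]
    apply Real.cos_pos_of_mem_Ioo
    constructor <;> push_cast <;> linarith

lemma rrCos_neg {n : ℕ} (hn : n % 5 = 1 ∨ n % 5 = 3 ∨ n % 5 = 4) : rrCos n < 0 := by
  have hpi := Real.pi_pos
  rw [← rrCos_mod_five]
  rcases hn with hn | hn | hn <;> rw [hn, rrCos]
  · apply Real.cos_neg_of_pi_div_two_lt_of_lt <;> push_cast <;> linarith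
  all_goals
    rw [← Real.cos_sub_two_pi]
    apply Real.cos_neg_of_pi_div_two_lt_of_lt <;> push_cast <;> linarith

lemma rrCos_ne_zero (n : ℕ) : rrCos n ≠ 0 := by
  obtain hn | hn : (n % 5 = 0 ∨ n % 5 = 2) ∨ (n % 5 = 1 ∨ n % 5 = 3 ∨ n % 5 = 4) := by lia
  · exact (rrCos_pos hn).ne'
  · exact (rrCos_neg hn).ne

lemma exists_abs_inv_rrCos_le : ∃ M, ∀ n, |(rrCos n)⁻¹| ≤ M := by
  refine ⟨∑ r ∈ Finset.range 5, |(rrCos r)⁻¹|, fun n ↦ ?_⟩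
  rw [← rrCos_mod_five]
  exact Finset.single_le_sum (f := fun r ↦ |(rrCos r)⁻¹|) (fun _ _ ↦ abs_nonneg _)
    (Finset.mem_range.mpr (n.mod_lt (by simp)))

section Coefficients

lemma tendsto_exp_rrLog_mul_exp_neg (K : ℝ) :
    Tendsto (fun s ↦ exp (rrLog (exp ((4 * Real.pi / 5 : ℝ) * I - s))) *
      exp (-((4 * Real.pi ^ 2 / 125 : ℝ) / s))) (𝓝[sector K] 0)
      (𝓝 (exp (-(3 * Real.pi * I / 25)))) := by
  refine (tendsto_rrLog_sub_div K).cexp.congr fun s ↦ ?_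
  have hpoint : ZMod.stdAddChar (2 : ZMod 5) * exp (-s) =
      exp ((4 * Real.pi / 5 : ℝ) * I - s) := by
    rw [show (2 : ZMod 5) = ((2 : ℤ) : ZMod 5) by rfl, ZMod.stdAddChar_coe, ← exp_add]
    congr 1
    push_cast
    ring
  rw [hpoint, ← exp_add, ← sub_eq_add_neg]

variable {C : ℕ → ℂ}

lemma tendsto_re_coeff_div_saddleScale_sub_rrCos
    (hC : ∀ q, ‖q‖ < 1 → HasSum (fun n ↦ C n * q ^ n) (exp (rrLog q))) :
    Tendsto (fun n : ℕ ↦ (C n).re / saddleScale (4 * Real.pi ^ 2 / 125) n - rrCos n) atTop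
      (𝓝 0) := by
  have hpi := Real.pi_pos
  have hconj (q : ℂ) : exp (rrLog (starRingEnd ℂ q)) = starRingEnd ℂ (exp (rrLog q)) := by
    rw [rrLog_conj, exp_conj]
  refine (tendsto_re_coeff_div_saddleScale_sub hC hconj (K := 100) (η := 1 / 100)
    (θ := 4 * Real.pi / 5) (by positivity) (by norm_num) ⟨by positivity, by linarith⟩ (by norm_num)
    (tendsto_exp_rrLog_mul_exp_neg _) ?_).congr fun n ↦ ?_
  · filter_upwards [eventually_re_rrLog_le] with σ hσ φ hφ hφσ
    rw [norm_exp]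
    exact Real.exp_le_exp.mpr (hσ φ hφ hφσ)
  · have hphase : -(3 * Real.pi * I / 25) + -(n * (4 * Real.pi / 5 : ℝ) * I) =
        (-(4 * Real.pi / 5 * (n + 3 / 20)) : ℝ) * I := by
      push_cast
      ring
    rw [← exp_add, hphase, exp_ofReal_mul_I_re, Real.cos_neg, rrCos]

lemma tendsto_re_coeff_div_saddleScale_mul_rrCos
    (hC : ∀ q, ‖q‖ < 1 → HasSum (fun n ↦ C n * q ^ n) (exp (rrLog q))) (a : ℝ) :
    Tendsto (fun n : ℕ ↦ (C n).re / (saddleScale (4 * Real.pi ^ 2 / 125) (n + a) * rrCos n)) atTop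
      (𝓝 1) := by
  obtain ⟨M, hM⟩ := exists_abs_inv_rrCos_le
  have hA : 0 < 4 * Real.pi ^ 2 / 125 := by positivity
  have hratio := (bdd_le_mul_tendsto_zero' M (Eventually.of_forall hM)
    (tendsto_re_coeff_div_saddleScale_sub_rrCos hC)).add_const 1
  have hshift := (tendsto_saddleScale_div_saddleScale_add hA a).comp tendsto_natCast_atTop_atTop
  rw [zero_add] at hratio
  refine (one_mul (1 : ℝ) ▸ hratio.mul hshift).congr' ?_
  filter_upwards [eventually_gt_atTop 0] with n hn
  have hscale := (saddleScale_pos hA (Nat.cast_pos.mpr hn)).ne'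
  have hcos := rrCos_ne_zero n
  simp only [Function.comp]
  field_simp
  ring

end Coefficients

/-- Let `C : ℕ → ℂ` satisfy
`Σ_{n≥0} C(n)qⁿ = ∏_{k≥0}((1 − q^{5k+1})(1 − q^{5k+4}))/((1 − q^{5k+2})(1 − q^{5k+3}))`
for `|q| < 1`. Then `C(n) ∼ (2^{1/2}/5^{3/4})·cos((4π/5)(n + 3/20))·(n + 1/5)^{−3/4}·
exp((4π/(5√5))·√(n + 1/5))`, and for all sufficiently large `n`, `C(n) > 0` when
`n ≡ 0, 2 (mod 5)` and `C(n) < 0` when `n ≡ 1, 3, 4 (mod 5)`. -/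
theorem rr_coeff_asymptotic (C : ℕ → ℂ)
    (hC : ∀ q : ℂ, ‖q‖ < 1 → HasSum (fun n : ℕ => C n * q ^ n)
      (∏' k : ℕ, ((1 - q ^ (5 * k + 1)) * (1 - q ^ (5 * k + 4))) /
        ((1 - q ^ (5 * k + 2)) * (1 - q ^ (5 * k + 3))))) :
    Tendsto (fun n : ℕ =>
        C n / (((Real.sqrt 2 / (5 : ℝ) ^ ((3 : ℝ) / 4) *
          Real.cos (4 * Real.pi / 5 * ((n : ℝ) + 3 / 20)) *
          ((n : ℝ) + 1 / 5) ^ (-(3 : ℝ) / 4) *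
          Real.exp (4 * Real.pi / (5 * Real.sqrt 5) * Real.sqrt ((n : ℝ) + 1 / 5)) : ℝ) : ℂ)))
      atTop (nhds 1) ∧
    ∃ N₀ : ℕ, ∀ n ≥ N₀,
      ((n % 5 = 0 ∨ n % 5 = 2) → (C n).im = 0 ∧ 0 < (C n).re) ∧
      ((n % 5 = 1 ∨ n % 5 = 3 ∨ n % 5 = 4) → (C n).im = 0 ∧ (C n).re < 0) := by
  have hC' : ∀ q, ‖q‖ < 1 → HasSum (fun n ↦ C n * q ^ n) (exp (rrLog q)) := fun q hq ↦
    rrProd_eq_exp_rrLog hq ▸ hC q hq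
  have hreal (n : ℕ) : (C n).im = 0 :=
    im_coeff_eq_zero hC' (fun q ↦ by rw [rrLog_conj, exp_conj]) n
  have hlim := tendsto_re_coeff_div_saddleScale_mul_rrCos hC' (1 / 5)
  constructor
  · refine (ofReal_one ▸ hlim.ofReal).congr fun n ↦ ?_
    rw [saddleScale_four_mul_pi_sq_div, ofReal_div,
      conj_eq_iff_re.mp (conj_eq_iff_im.mpr (hreal n)), rrCos]
    congr 2
    ring
  · obtain ⟨N₀, hN₀⟩ := eventually_atTop.mp (hlim.eventually_const_lt one_pos)
    refine ⟨N₀, fun n hn ↦ ?_⟩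
    have hratio := hN₀ n hn
    have hscale : 0 < saddleScale (4 * Real.pi ^ 2 / 125) (n + 1 / 5) :=
      saddleScale_pos (by positivity) (by positivity)
    refine ⟨fun h ↦ ⟨hreal n, ?_⟩, fun h ↦ ⟨hreal n, ?_⟩⟩
    · exact (div_pos_iff_of_pos_right (mul_pos hscale (rrCos_pos h))).mp hratio
    · exact lt_of_not_ge fun hre ↦ hratio.not_ge <|
        div_nonpos_of_nonneg_of_nonpos hre (mul_neg_of_pos_of_neg hscale (rrCos_neg h)).le
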